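/- arXiv:2108.06814 — 2 statements merged into one kernel-verified Lean document; each statement's English description precedes it below -/
import Mathlib

section
/- For n ≥ 10, any orientation preserving C^1 action of an arbitrary finite index subgroup Γ of Out(F_n) on the circle cannot be faithful; that is, every group homomorphism Γ → Diff^1_+(S^1) has nontrivial kernel. -/
noncomputable section

open MeasureTheory

/-- The circle `S¹ = ℝ/ℤ`. -/
abbrev 𝕊 : Type := AddCircle (1 : ℝ)

/-- `F : ℝ → ℝ` is a lift of the circle bijection `f` witnessing that `f` is an
orientation preserving homeomorphism of the circle: `F` is a strictly increasing
homeomorphism of `ℝ` (equivalently, continuous and strictly increasing) satisfying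
`F (x + 1) = F x + 1`, and projecting to `f`. -/
def IsOPLift (f : Equiv.Perm 𝕊) (F : ℝ → ℝ) : Prop :=
  Continuous F ∧ StrictMono F ∧ (∀ x : ℝ, F (x + 1) = F x + 1) ∧
    ∀ x : ℝ, f (x : 𝕊) = (F x : 𝕊)

/-- `f` is an orientation preserving homeomorphism of the circle. -/
def IsOPHomeo (f : Equiv.Perm 𝕊) : Prop := ∃ F : ℝ → ℝ, IsOPLift f F

/-- `F` is a lift witnessing that `f` is an orientation preserving `C¹` diffeomorphism
of the circle: an orientation preserving lift which is `C¹` with nowhere vanishing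
derivative. -/
def IsC1Lift (f : Equiv.Perm 𝕊) (F : ℝ → ℝ) : Prop :=
  IsOPLift f F ∧ ContDiff ℝ 1 F ∧ ∀ x : ℝ, deriv F x ≠ 0

/-- `f` is an orientation preserving `C¹` diffeomorphism of the circle, i.e. an element
of `Diff¹₊(S¹)`. -/
def IsC1Diffeo (f : Equiv.Perm 𝕊) : Prop := ∃ F : ℝ → ℝ, IsC1Lift f F

/-- The free group of rank `n`. -/
abbrev FreeGrp (n : ℕ) : Type := FreeGroup (Fin n)

/-- The automorphism group `Aut(Fₙ)`. -/
abbrev AutF (n : ℕ) : Type := MulAut (FreeGrp n)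

/-- The subgroup `IAₙ ≤ Aut(Fₙ)` of automorphisms acting trivially on the abelianization
`Fₙ^{ab} ≅ ℤⁿ`, i.e. the kernel of the natural map `Aut(Fₙ) → Aut(ℤⁿ)`. -/
def IA (n : ℕ) : Subgroup (AutF n) where
  carrier := {e | ∀ x : FreeGrp n, Abelianization.of (e x) = Abelianization.of x}
  one_mem' := fun _ => rfl
  mul_mem' := by
    intro a b ha hb x
    have h : (a * b) x = a (b x) := rfl
    rw [h, ha (b x), hb x]
  inv_mem' := by
    intro a ha x
    have h := ha (a⁻¹ x)
    have h' : a (a⁻¹ x) = x := a.apply_symm_apply x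
    rw [h'] at h
    exact h.symm

/-- The subgroup of inner automorphisms of `Fₙ`. -/
def InnF (n : ℕ) : Subgroup (AutF n) := (MulAut.conj : FreeGrp n →* AutF n).range

instance (n : ℕ) : (InnF n).Normal := by
  constructor
  rintro _ ⟨g, rfl⟩ e
  refine ⟨e g, ?_⟩
  ext x
  simp [MulAut.conj_apply, MulAut.mul_apply, MulAut.inv_def, map_mul, map_inv]

/-- The outer automorphism group `Out(Fₙ) = Aut(Fₙ)/Inn(Fₙ)`. -/
def OutF (n : ℕ) : Type := AutF n ⧸ InnF n

instance (n : ℕ) : Group (OutF n) := QuotientGroup.Quotient.group (InnF n)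

/-- The Torelli subgroup `𝒯ₙ ≤ Out(Fₙ)`: the subgroup of outer automorphisms acting
trivially on the abelianization `Fₙ^{ab} ≅ ℤⁿ`, i.e. the kernel of the induced map
`Out(Fₙ) → Aut(ℤⁿ)`.  Since inner automorphisms act trivially on the abelianization,
this kernel is exactly the image of `IAₙ` in `Out(Fₙ)`. -/
def Torelli (n : ℕ) : Subgroup (OutF n) :=
  (IA n).map (QuotientGroup.mk' (InnF n))

section
open Filter Topology Asymptotics

theorem thurston_local {G : Type*} [Group G] (S : Finset G)
    (hS : Subgroup.closure (S : Set G) = ⊤)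
    (hom0 : ∀ f : G →* Multiplicative ℝ, ∀ g, f g = 1)
    (F : G → ℝ → ℝ) (hmul : ∀ g h x, F (g * h) x = F g (F h x)) (hone : ∀ x, F 1 x = x)
    (hC : ∀ g, ContDiff ℝ 1 (F g)) (hmono : ∀ g, StrictMono (F g))
    (a : ℝ) (ha : ∀ g, F g a = a) (x : ℕ → ℝ) (hx : Tendsto x atTop (𝓝 a))
    (hne : ∀ k, ∃ g, F g (x k) ≠ x k) : False := by
  have hd : ∀ g y, DifferentiableAt ℝ (F g) y := fun g y =>
    ((hC g).differentiable one_ne_zero).differentiableAt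
  have hchain : ∀ g h, deriv (F (g * h)) a = deriv (F g) a * deriv (F h) a := by
    intro g h
    have e : F (g * h) = F g ∘ F h := by funext y; exact hmul g h y
    rw [e, deriv_comp _ (hd g _) (hd h _), ha h]
  have hone' : deriv (F 1) a = 1 := by
    have e : F 1 = id := by funext y; exact hone y
    rw [e, deriv_id]
  have hdne : ∀ g, deriv (F g) a ≠ 0 := by
    intro g h0
    have := hchain g g⁻¹
    rw [mul_inv_cancel, hone', h0, zero_mul] at this
    exact one_ne_zero this
  have hpos : ∀ g, 0 < deriv (F g) a := fun g =>
    lt_of_le_of_ne (hmono g).monotone.deriv_nonneg (hdne g).symm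
  have hd1 : ∀ g, deriv (F g) a = 1 := by
    intro g
    let f : G →* Multiplicative ℝ :=
      { toFun := fun g => Multiplicative.ofAdd (Real.log (deriv (F g) a))
        map_one' := by simp [hone']
        map_mul' := by
          intro g h
          rw [hchain, Real.log_mul (hdne g) (hdne h), ofAdd_add] }
    have h1 : Real.log (deriv (F g) a) = 0 := by
      have := hom0 f g
      exact this
    have := Real.exp_log (hpos g)
    rw [h1, Real.exp_zero] at this
    exact this.symm
  set D : G → ℕ → ℝ := fun g k => F g (x k) - x k with hD
  have hlim : ∀ h, Tendsto (fun k => F h (x k)) atTop (𝓝 a) := by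
    intro h
    have := ((hC h).continuous.tendsto a).comp hx
    rwa [ha h] at this
  have hlo : ∀ g h, (fun k => D (g * h) k - D g k - D h k) =o[atTop] D h := by
    intro g h
    have h1 : HasStrictDerivAt (F g) 1 a := by
      have := (hC g).contDiffAt.hasStrictDerivAt (x := a) one_ne_zero
      rwa [hd1 g] at this
    have h2 := (hasStrictDerivAt_iff_hasStrictFDerivAt.1 h1).isLittleO
    have h3 : Tendsto (fun k => (F h (x k), x k)) atTop (𝓝 (a, a)) := (hlim h).prodMk_nhds hx
    have h4 := h2.comp_tendsto h3
    refine IsLittleO.congr h4 ?_ ?_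
    · intro k; simp [hD, hmul]
    · intro k; simp [hD]
  set M : ℕ → ℝ := fun k => ∑ s ∈ S, |D s k| with hM
  have hMpos : ∀ k, 0 < M k := by
    intro k
    by_contra hcon
    have h0 : M k = 0 := le_antisymm (not_lt.1 hcon) (Finset.sum_nonneg fun _ _ => abs_nonneg _)
    have h1 : ∀ s ∈ S, F s (x k) = x k := by
      intro s hs
      have := (Finset.sum_eq_zero_iff_of_nonneg (fun _ _ => abs_nonneg _)).1 h0 s hs
      exact sub_eq_zero.1 (abs_eq_zero.1 this)
    obtain ⟨g, hg⟩ := hne k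
    apply hg
    have hgm : g ∈ Subgroup.closure (S : Set G) := by rw [hS]; trivial
    induction hgm using Subgroup.closure_induction with
    | mem s hs => exact h1 s hs
    | one => exact hone _
    | mul g h _ _ ih1 ih2 =>
      by_cases e1 : F h (x k) = x k
      · by_cases e2 : F g (x k) = x k
        · rw [hmul, e1, e2]
        · exact absurd (ih1 e2) e2
      · exact absurd (ih2 e1) e1
    | inv g _ ih =>
      by_cases e : F g (x k) = x k
      · conv_lhs => rw [← e]
        rw [← hmul, inv_mul_cancel, hone]
      · exact absurd (ih e) e
  have hO : ∀ g, D g =O[atTop] M := by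
    intro g
    have hgm : g ∈ Subgroup.closure (S : Set G) := by rw [hS]; trivial
    induction hgm using Subgroup.closure_induction with
    | mem s hs =>
      refine IsBigO.of_bound 1 (Eventually.of_forall fun k => ?_)
      rw [one_mul, Real.norm_eq_abs, Real.norm_eq_abs, abs_of_pos (hMpos k)]
      exact Finset.single_le_sum (f := fun s => |D s k|) (fun _ _ => abs_nonneg _) hs
    | one =>
      have : D 1 = fun _ => 0 := by funext k; simp [hD, hone]
      rw [this]; exact isBigO_zero _ _
    | mul g h _ _ ih1 ih2 =>
      have := (((hlo g h).isBigO.trans ih2).add ih1).add ih2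
      refine this.congr_left ?_
      intro k; ring
    | inv g _ ih =>
      have := (((hlo g⁻¹ g).isBigO.trans ih).add ih).neg_left
      refine this.congr_left ?_
      intro k; simp [hD, hone]
  let U : Ultrafilter ℕ := hyperfilter ℕ
  have hU : (U : Filter ℕ) ≤ atTop := Nat.hyperfilter_le_atTop
  have hl : ∀ g, ∃ l : ℝ, Tendsto (fun k => D g k / M k) U (𝓝 l) := by
    intro g
    obtain ⟨C, hCb⟩ := (hO g).bound
    have hCb' : ∀ᶠ k in (U : Filter ℕ), D g k / M k ∈ Set.Icc (-C) C := by
      filter_upwards [hU hCb] with k hk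
      rw [Real.norm_eq_abs, Real.norm_eq_abs, abs_of_pos (hMpos k)] at hk
      rw [Set.mem_Icc, ← abs_le, abs_div, abs_of_pos (hMpos k), div_le_iff₀ (hMpos k)]
      exact hk
    obtain ⟨l, _, hl⟩ := (isCompact_Icc (a := -C) (b := C)).ultrafilter_le_nhds
      (U.map (fun k => D g k / M k)) (by
        rw [le_principal_iff]; exact hCb')
    exact ⟨l, hl⟩
  choose l hl using hl
  have hladd : ∀ g h, l (g * h) = l g + l h := by
    intro g h
    have h1 : Tendsto (fun k => (D (g * h) k - D g k - D h k) / M k) U (𝓝 0) :=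
      (((hlo g h).trans_isBigO (hO h)).tendsto_div_nhds_zero).mono_left hU
    have h2 : Tendsto (fun k => (D (g * h) k - D g k - D h k) / M k) U
        (𝓝 (l (g * h) - l g - l h)) := by
      refine (((hl (g * h)).sub (hl g)).sub (hl h)).congr ?_
      intro k; ring
    have := tendsto_nhds_unique h1 h2
    linarith
  let f : G →* Multiplicative ℝ := MonoidHom.mk' (fun g => Multiplicative.ofAdd (l g)) (by
    intro g h; rw [hladd, ofAdd_add])
  have hl0 : ∀ g, l g = 0 := fun g => hom0 f g
  have hsum : Tendsto (fun k => ∑ s ∈ S, |D s k / M k|) U (𝓝 (∑ s ∈ S, |l s|)) :=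
    tendsto_finsetSum _ fun s _ => (hl s).abs
  have hsum1 : (fun k => ∑ s ∈ S, |D s k / M k|) = fun _ => (1 : ℝ) := by
    funext k
    simp_rw [abs_div, abs_of_pos (hMpos k)]
    rw [← Finset.sum_div]
    exact div_self (hMpos k).ne'
  rw [hsum1] at hsum
  have := tendsto_nhds_unique hsum tendsto_const_nhds
  simp [hl0] at this

theorem thurston_line {G : Type*} [Group G] [hfg : Group.FG G]
    (hom0 : ∀ f : G →* Multiplicative ℝ, ∀ g, f g = 1)
    (F : G → ℝ → ℝ) (hmul : ∀ g h x, F (g * h) x = F g (F h x)) (hone : ∀ x, F 1 x = x)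
    (hC : ∀ g, ContDiff ℝ 1 (F g)) (hmono : ∀ g, StrictMono (F g))
    (hper : ∀ g x, F g (x + 1) = F g x + 1)
    (p : ℝ) (hp : ∀ g, F g p = p) : ∀ g x, F g x = x := by
  obtain ⟨S, hS⟩ := hfg.out
  by_contra hcon
  push Not at hcon
  obtain ⟨g, y, hgy⟩ := hcon
  set Fx : Set ℝ := {z | ∀ g, F g z = z} with hFx
  have hcl : IsClosed Fx := by
    have : Fx = ⋂ g, {z | F g z = z} := by ext; simp [hFx]
    rw [this]
    exact isClosed_iInter fun g => isClosed_eq (hC g).continuous continuous_id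
  have hsub : ∀ n : ℕ, p - n ∈ Fx := by
    intro n
    induction n with
    | zero => simpa [hFx] using hp
    | succ n ih =>
      intro g
      have h1 := ih g
      have h2 := hper g (p - (n + 1 : ℕ))
      have h3 : p - ((n + 1 : ℕ) : ℝ) + 1 = p - n := by push_cast; ring
      rw [h3, h1] at h2
      push_cast at *
      linarith
  obtain ⟨n, hn⟩ := exists_nat_ge (p - y)
  have hne : (Fx ∩ Set.Iic y).Nonempty := ⟨p - n, hsub n, by simp; linarith⟩
  have hbd : BddAbove (Fx ∩ Set.Iic y) := ⟨y, fun z hz => hz.2⟩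
  set a := sSup (Fx ∩ Set.Iic y) with hadef
  have haF : a ∈ Fx ∩ Set.Iic y := (hcl.inter isClosed_Iic).csSup_mem hne hbd
  have hay : a < y := by
    refine lt_of_le_of_ne haF.2 ?_
    intro e
    exact hgy (e ▸ haF.1 g)
  refine thurston_local S hS hom0 F hmul hone hC hmono a haF.1
    (fun k => a + (y - a) * (1 / ((k : ℝ) + 1))) ?_ ?_
  · have := (tendsto_one_div_add_atTop_nhds_zero_nat (𝕜 := ℝ)).const_mul (y - a)
    have := this.const_add a
    simpa using this
  · intro k
    by_contra hcon
    push Not at hcon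
    have h1 : (0 : ℝ) < 1 / ((k : ℝ) + 1) := by positivity
    have h2 : 1 / ((k : ℝ) + 1) ≤ 1 := by
      rw [div_le_one (by positivity)]; linarith [(Nat.cast_nonneg k : (0 : ℝ) ≤ k)]
    have h3 : a + (y - a) * (1 / ((k : ℝ) + 1)) ≤ a := le_csSup hbd ⟨hcon, by
      simp only [Set.mem_Iic]; nlinarith⟩
    nlinarith

theorem circ_coe_eq (x y : ℝ) : (x : 𝕊) = (y : 𝕊) ↔ ∃ n : ℤ, y = x + n := by
  constructor
  · intro h
    have h2 : ((y - x : ℝ) : 𝕊) = 0 := by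
      rw [AddCircle.coe_sub, h, sub_self]
    obtain ⟨n, hn⟩ := (AddCircle.coe_eq_zero_iff (1 : ℝ)).1 h2
    refine ⟨n, ?_⟩
    rw [zsmul_eq_mul, mul_one] at hn
    linarith
  · rintro ⟨n, rfl⟩
    have : ((n : ℝ) : 𝕊) = 0 := (AddCircle.coe_eq_zero_iff (1 : ℝ)).2 ⟨n, by simp⟩
    rw [AddCircle.coe_add, this, add_zero]

theorem circ_ind (x : 𝕊) : ∃ t : ℝ, (t : 𝕊) = x := QuotientAddGroup.mk_surjective x

theorem IsOPLift.per_int {f : Equiv.Perm 𝕊} {F : ℝ → ℝ} (h : IsOPLift f F) (x : ℝ) (n : ℤ) :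
    F (x + n) = F x + n := by
  have hn : ∀ (k : ℕ) (x : ℝ), F (x + k) = F x + k := by
    intro k
    induction k with
    | zero => intro x; simp
    | succ k ih =>
      intro x
      have := h.2.2.1 (x + k)
      rw [ih] at this
      push_cast
      rw [← add_assoc, this]; ring
  obtain ⟨k, rfl | rfl⟩ := n.eq_nat_or_neg
  · simpa using hn k x
  · have := hn k (x + ((-(k : ℤ) : ℤ) : ℝ))
    push_cast at *
    rw [add_assoc, neg_add_cancel, add_zero] at this
    linarith

theorem IsOPLift.diff {f : Equiv.Perm 𝕊} {F F' : ℝ → ℝ} (h : IsOPLift f F) (h' : IsOPLift f F') :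
    ∃ n : ℤ, ∀ x, F' x = F x + n := by
  have hZ : ∀ x, ∃ n : ℤ, F' x = F x + n := by
    intro x
    rw [← circ_coe_eq, ← h.2.2.2, ← h'.2.2.2]
  choose n hn using hZ
  have hc : Continuous (fun x => F' x - F x) := h'.1.sub h.1
  have hr : (Set.range (fun x => F' x - F x)).OrdConnected :=
    (isPreconnected_range hc).ordConnected
  have key : ∀ x y, ¬ n x < n y := by
    intro x y hxy
    have hmem : ((n x : ℝ) + 1/2) ∈ Set.range (fun x => F' x - F x) := by
      refine hr.out (x := n x) (y := n y) ⟨x, by simp [hn]⟩ ⟨y, by simp [hn]⟩ ⟨by linarith, ?_⟩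
      have : ((n x + 1 : ℤ) : ℝ) ≤ n y := by exact_mod_cast hxy
      push_cast at this
      linarith
    obtain ⟨z, hz⟩ := hmem
    have h1 : (n z : ℝ) = n x + 1/2 := by rw [← hz]; simp [hn]
    have h2 : ((2 * n z : ℤ) : ℝ) = ((2 * n x + 1 : ℤ) : ℝ) := by push_cast; linarith
    have h3 : (2 * n z : ℤ) = 2 * n x + 1 := by exact_mod_cast h2
    omega
  refine ⟨n 0, fun x => ?_⟩
  rw [hn x, le_antisymm (not_lt.1 (key 0 x)) (not_lt.1 (key x 0))]

theorem IsOPLift.comp {f g : Equiv.Perm 𝕊} {F G : ℝ → ℝ} (h : IsOPLift f F) (h' : IsOPLift g G) :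
    IsOPLift (f * g) (fun x => F (G x)) := by
  refine ⟨h.1.comp h'.1, h.2.1.comp h'.2.1, fun x => ?_, fun x => ?_⟩
  · beta_reduce; rw [h'.2.2.1, h.2.2.1]
  · rw [Equiv.Perm.mul_apply, h'.2.2.2, h.2.2.2]

theorem IsOPLift.one : IsOPLift 1 (fun x => x) :=
  ⟨continuous_id, strictMono_id, fun _ => rfl, fun _ => rfl⟩

theorem IsOPLift.addInt {f : Equiv.Perm 𝕊} {F : ℝ → ℝ} (h : IsOPLift f F) (n : ℤ) :
    IsOPLift f (fun x => F x + n) := by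
  refine ⟨h.1.add continuous_const, h.2.1.add_const _, fun x => ?_, fun x => ?_⟩
  · beta_reduce; rw [h.2.2.1]; ring
  · rw [h.2.2.2]; exact (circ_coe_eq _ _).2 ⟨n, rfl⟩

theorem thurston_circle {G : Type*} [Group G] [Group.FG G]
    (hom0 : ∀ f : G →* Multiplicative ℝ, ∀ g, f g = 1)
    (ρ : G →* Equiv.Perm 𝕊) (hρ : ∀ g, IsC1Diffeo (ρ g))
    (x0 : 𝕊) (hx0 : ∀ g, ρ g x0 = x0) : ∀ g, ρ g = 1 := by
  obtain ⟨p, rfl⟩ := circ_ind x0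
  have hL : ∀ g, ∃ F : ℝ → ℝ, IsOPLift (ρ g) F ∧ ContDiff ℝ 1 F ∧ F p = p := by
    intro g
    obtain ⟨F, h1, h2, -⟩ := hρ g
    have h3 := hx0 g
    rw [h1.2.2.2] at h3
    obtain ⟨n, hn⟩ := (circ_coe_eq _ _).1 h3
    exact ⟨fun x => F x + n, h1.addInt n, h2.add contDiff_const, hn.symm⟩
  choose F h1 h2 h3 using hL
  have huniq : ∀ (f : Equiv.Perm 𝕊) (A B : ℝ → ℝ), IsOPLift f A → IsOPLift f B → A p = p → B p = p →
      ∀ x, A x = B x := by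
    intro f A B hA hB ha hb x
    obtain ⟨n, hn⟩ := hA.diff hB
    have := hn p
    rw [ha, hb] at this
    rw [hn x]
    linarith
  have hmul : ∀ g h x, F (g * h) x = F g (F h x) := by
    intro g h
    have := (h1 g).comp (h1 h)
    rw [← map_mul] at this
    exact huniq _ _ _ (h1 _) this (h3 _) (by rw [h3, h3])
  have hone : ∀ x, F 1 x = x := by
    refine huniq 1 _ _ ?_ IsOPLift.one (h3 1) rfl
    have := h1 1
    rwa [map_one] at this
  have := thurston_line hom0 F hmul hone h2 (fun g => (h1 g).2.1) (fun g => (h1 g).2.2.1) p h3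
  intro g
  ext x
  obtain ⟨t, rfl⟩ := circ_ind x
  rw [(h1 g).2.2.2, this]
  rfl

def IsOPLift.deg {f : Equiv.Perm 𝕊} {F : ℝ → ℝ} (h : IsOPLift f F) : CircleDeg1Lift where
  toFun := F
  monotone' := h.2.1.monotone
  map_add_one' := h.2.2.1

theorem deg_apply {f : Equiv.Perm 𝕊} {F : ℝ → ℝ} (h : IsOPLift f F) (x : ℝ) : h.deg x = F x := rfl

theorem trans_add_int {A B : CircleDeg1Lift} (n : ℤ) (h : ∀ x, B x = A x + n) :
    B.translationNumber = A.translationNumber + n := by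
  have e : B = A * (CircleDeg1Lift.translate (Multiplicative.ofAdd (n : ℝ)) : CircleDeg1Lift) := by
    ext x
    rw [CircleDeg1Lift.mul_apply, CircleDeg1Lift.translate_apply, h, CircleDeg1Lift.map_int_add,
      add_comm]
  rw [e, CircleDeg1Lift.translationNumber_mul_of_commute, CircleDeg1Lift.translationNumber_translate]
  rw [CircleDeg1Lift.commute_iff_commute]
  intro x
  rw [CircleDeg1Lift.translate_apply, CircleDeg1Lift.translate_apply, CircleDeg1Lift.map_int_add]

theorem deg_disp (F : CircleDeg1Lift) (x y : ℝ) : F y - y ≤ F x - x + 1 := by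
  have h1 : y ≤ x + (⌈y - x⌉ : ℤ) := by linarith [Int.le_ceil (y - x)]
  have h2 := F.monotone h1
  rw [F.map_add_int] at h2
  linarith [Int.ceil_lt_add_one (y - x)]

theorem trans_add_of_le (f g : CircleDeg1Lift) (O : Set ℝ) (hf : ∀ x ∈ O, f x ∈ O)
    (hg : ∀ x ∈ O, g x ∈ O) (h : ∀ x ∈ O, f (g x) ≤ g (f x)) (p : ℝ) (hp : p ∈ O) :
    (f * g).translationNumber = f.translationNumber + g.translationNumber ∧
    (g * f).translationNumber = f.translationNumber + g.translationNumber := by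
  have s : ∀ (F : CircleDeg1Lift) (n : ℕ) (x : ℝ), (F ^ (n + 1)) x = (F ^ n) (F x) := by
    intro F n x; rw [pow_succ, CircleDeg1Lift.mul_apply]
  have s' : ∀ (F : CircleDeg1Lift) (n : ℕ) (x : ℝ), (F ^ (n + 1)) x = F ((F ^ n) x) := by
    intro F n x; rw [pow_succ', CircleDeg1Lift.mul_apply]
  have z : ∀ (F : CircleDeg1Lift) (x : ℝ), (F ^ 0) x = x := fun F x => by simp
  have hfn : ∀ (n : ℕ), ∀ x ∈ O, (f ^ n) x ∈ O := by
    intro n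
    induction n with
    | zero => intro x hx; rwa [z]
    | succ n ih => intro x hx; rw [s]; exact ih _ (hf _ hx)
  have hgn : ∀ (n : ℕ), ∀ x ∈ O, (g ^ n) x ∈ O := by
    intro n
    induction n with
    | zero => intro x hx; rwa [z]
    | succ n ih => intro x hx; rw [s]; exact ih _ (hg _ hx)
  have a1 : ∀ (n : ℕ), ∀ x ∈ O, f ((g ^ n) x) ≤ (g ^ n) (f x) := by
    intro n
    induction n with
    | zero => intro x hx; simp
    | succ n ih =>
      intro x hx
      rw [s', s']
      exact (h _ (hgn n x hx)).trans (g.monotone (ih x hx))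
  have a2 : ∀ (n : ℕ), ∀ x ∈ O, (f ^ n) (g x) ≤ g ((f ^ n) x) := by
    intro n
    induction n with
    | zero => intro x hx; simp
    | succ n ih =>
      intro x hx
      rw [s, s]
      exact ((f ^ n).monotone (h x hx)).trans (ih _ (hf x hx))
  have a3 : ∀ (n : ℕ), ∀ x ∈ O, ((f * g) ^ n) x ≤ (g ^ n) ((f ^ n) x) ∧
      (f ^ n) ((g ^ n) x) ≤ ((f * g) ^ n) x ∧ ((g * f) ^ n) x ≤ (g ^ n) ((f ^ n) x) ∧
      (f ^ n) ((g ^ n) x) ≤ ((g * f) ^ n) x := by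
    intro n
    induction n with
    | zero => intro x hx; simp
    | succ n ih =>
      intro x hx
      refine ⟨?_, ?_, ?_, ?_⟩
      · rw [s (f * g), s g, s f, CircleDeg1Lift.mul_apply]
        refine (ih _ (hf _ (hg _ hx))).1.trans ((g ^ n).monotone ?_)
        have := a2 (n + 1) x hx
        rwa [s, s] at this
      · rw [s' (f * g), s' g, s' f, CircleDeg1Lift.mul_apply]
        refine le_trans (f.monotone (a2 n _ (hgn n x hx))) ?_
        exact f.monotone (g.monotone (ih x hx).2.1)
      · rw [s' (g * f), s' g, s' f, CircleDeg1Lift.mul_apply]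
        refine le_trans (g.monotone (f.monotone (ih x hx).2.2.1)) ?_
        exact g.monotone (a1 n _ (hfn n x hx))
      · rw [s (g * f), s g, s f, CircleDeg1Lift.mul_apply]
        refine le_trans ?_ (ih _ (hg _ (hf _ hx))).2.2.2
        refine (f ^ n).monotone ?_
        have := a1 (n + 1) x hx
        rwa [s, s] at this
  have inv0 : Tendsto (fun n : ℕ => (1 : ℝ) / n) atTop (𝓝 0) := tendsto_one_div_atTop_nhds_zero_nat
  have T1 := f.tendsto_translationNumber p
  have T2 := g.tendsto_translationNumber p
  have lo : Tendsto (fun n : ℕ => ((f ^ n) p - p) / n + ((g ^ n) p - p) / n - 1 / n) atTop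
      (𝓝 (f.translationNumber + g.translationNumber)) := by
    simpa using (T1.add T2).sub inv0
  have hi : Tendsto (fun n : ℕ => ((f ^ n) p - p) / n + ((g ^ n) p - p) / n + 1 / n) atTop
      (𝓝 (f.translationNumber + g.translationNumber)) := by
    simpa using (T1.add T2).add inv0
  constructor
  · refine tendsto_nhds_unique ((f * g).tendsto_translationNumber p)
      (tendsto_of_tendsto_of_tendsto_of_le_of_le lo hi ?_ ?_)
    · intro n
      have h1 := (a3 n p hp).2.1
      have h2 := deg_disp (f ^ n) ((g ^ n) p) p
      simp only [← add_div, ← sub_div]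
      exact div_le_div_of_nonneg_right (by linarith) (Nat.cast_nonneg n)
    · intro n
      have h1 := (a3 n p hp).1
      have h2 := deg_disp (g ^ n) p ((f ^ n) p)
      simp only [← add_div, ← sub_div]
      exact div_le_div_of_nonneg_right (by linarith) (Nat.cast_nonneg n)
  · refine tendsto_nhds_unique ((g * f).tendsto_translationNumber p)
      (tendsto_of_tendsto_of_tendsto_of_le_of_le lo hi ?_ ?_)
    · intro n
      have h1 := (a3 n p hp).2.2.2
      have h2 := deg_disp (f ^ n) ((g ^ n) p) p
      simp only [← add_div, ← sub_div]
      exact div_le_div_of_nonneg_right (by linarith) (Nat.cast_nonneg n)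
    · intro n
      have h1 := (a3 n p hp).2.2.1
      have h2 := deg_disp (g ^ n) p ((f ^ n) p)
      simp only [← add_div, ← sub_div]
      exact div_le_div_of_nonneg_right (by linarith) (Nat.cast_nonneg n)

theorem lift_dich {H : Type*} [Group H] (ρ : H →* Equiv.Perm 𝕊)
    (hρ : ∀ h, IsOPHomeo (ρ h)) (x0 : 𝕊)
    (hfix : ∀ h, (∃ y, ρ h y = y) → ρ h x0 = x0) (a b : H) (f g : ℝ → ℝ)
    (hf : IsOPLift (ρ a) f) (hg : IsOPLift (ρ b) g) :
    (∀ x : ℝ, (∃ w, (x : 𝕊) = ρ w x0) → f (g x) ≤ g (f x)) ∨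
    (∀ x : ℝ, (∃ w, (x : 𝕊) = ρ w x0) → g (f x) ≤ f (g x)) := by
  have h1 := hf.comp hg
  have h2 := hg.comp hf
  have e1 : ∀ x : ℝ, ((f (g x) : ℝ) : 𝕊) = ρ a (ρ b x) := by
    intro x; rw [hg.2.2.2, hf.2.2.2]
  have e2 : ∀ x : ℝ, ((g (f x) : ℝ) : 𝕊) = ρ b (ρ a x) := by
    intro x; rw [hf.2.2.2, hg.2.2.2]
  by_cases hy : ∃ y, f (g y) = g (f y)
  · left
    obtain ⟨y, hy⟩ := hy
    rintro x ⟨w, hw⟩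
    have hc : ρ (w⁻¹ * ((b * a)⁻¹ * (a * b)) * w) x0 = x0 := by
      apply hfix
      refine ⟨ρ w⁻¹ y, ?_⟩
      have : ρ a (ρ b y) = ρ b (ρ a y) := by rw [← e1, ← e2, hy]
      simp [this]
    have hc2 : ρ a (ρ b x) = ρ b (ρ a x) := by
      rw [hw]
      have h3 : ρ (b * a * w * (w⁻¹ * ((b * a)⁻¹ * (a * b)) * w)) x0 = ρ (b * a * w) x0 := by
        rw [map_mul, Equiv.Perm.mul_apply, hc]
      have h4 : b * a * w * (w⁻¹ * ((b * a)⁻¹ * (a * b)) * w) = a * b * w := by group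
      rw [h4] at h3
      simpa using h3
    rw [← e1, ← e2] at hc2
    obtain ⟨k, hk⟩ := (circ_coe_eq _ _).1 hc2
    set m := ⌊x - y⌋ with hm
    have m1 : y + m ≤ x := by linarith [Int.floor_le (x - y)]
    have m2 : x < y + (m + 1 : ℤ) := by push_cast; linarith [Int.lt_floor_add_one (x - y)]
    have q1 := h1.2.1.monotone m1
    have q2 := h1.2.1 m2
    have q3 := h2.2.1.monotone m1
    have q4 := h2.2.1 m2
    beta_reduce at q1 q2 q3 q4
    rw [h1.per_int] at q1 q2
    rw [h2.per_int] at q3 q4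
    push_cast at *
    have k1 : (-1 : ℝ) < k := by linarith
    have k1' : -1 < k := by exact_mod_cast k1
    have : (0 : ℤ) ≤ k := by omega
    have : (0 : ℝ) ≤ k := by exact_mod_cast this
    linarith
  · by_cases hx : ∃ x, f (g x) < g (f x)
    · left
      intro z _
      obtain ⟨x, hx⟩ := hx
      by_contra hz
      push Not at hz
      apply hy
      have hcont : Continuous fun t => f (g t) - g (f t) := h1.1.sub h2.1
      obtain ⟨t, ht⟩ := mem_range_of_exists_le_of_exists_ge hcont (c := 0) ⟨x, by linarith⟩
        ⟨z, by linarith⟩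
      exact ⟨t, by simpa [sub_eq_zero] using ht⟩
    · right
      push Not at hx
      exact fun z _ => hx z

theorem trans_add {H : Type*} [Group H] (ρ : H →* Equiv.Perm 𝕊)
    (hρ : ∀ h, IsOPHomeo (ρ h)) (x0 : 𝕊)
    (hfix : ∀ h, (∃ y, ρ h y = y) → ρ h x0 = x0) (a b : H) (f g : ℝ → ℝ)
    (hf : IsOPLift (ρ a) f) (hg : IsOPLift (ρ b) g) :
    (hf.deg * hg.deg).translationNumber = hf.deg.translationNumber + hg.deg.translationNumber := by
  obtain ⟨p, hp⟩ := circ_ind x0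
  set O : Set ℝ := {x | ∃ w, (x : 𝕊) = ρ w x0} with hO
  have hpO : p ∈ O := ⟨1, by simp [hp]⟩
  have hfO : ∀ x ∈ O, hf.deg x ∈ O := by
    rintro x ⟨w, hw⟩
    refine ⟨a * w, ?_⟩
    rw [deg_apply, ← hf.2.2.2, hw, map_mul]; rfl
  have hgO : ∀ x ∈ O, hg.deg x ∈ O := by
    rintro x ⟨w, hw⟩
    refine ⟨b * w, ?_⟩
    rw [deg_apply, ← hg.2.2.2, hw, map_mul]; rfl
  rcases lift_dich ρ hρ x0 hfix a b f g hf hg with h | h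
  · exact (trans_add_of_le hf.deg hg.deg O hfO hgO h p hpO).1
  · rw [(trans_add_of_le hg.deg hf.deg O hgO hfO h p hpO).2, add_comm]

theorem ker_finiteIndex_of_hom0 {H A : Type*} [Group H] [Group.FG H] [CommGroup A]
    (hom0 : ∀ f : H →* Multiplicative ℝ, ∀ g, f g = 1) (φ : H →* A) : φ.ker.FiniteIndex := by
  haveI : Group.FG φ.range := Group.fg_range φ
  obtain ⟨ι, j, _, _, p, hp, e, ⟨E⟩⟩ := CommGroup.equiv_free_prod_prod_multiplicative_zmod φ.range
  haveI : IsEmpty j := by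
    by_contra hj
    rw [not_isEmpty_iff] at hj
    obtain ⟨k⟩ := hj
    let f : H →* Multiplicative ℝ :=
      (AddMonoidHom.toMultiplicative (Int.castAddHom ℝ)).comp
        ((Pi.evalMonoidHom (fun _ : j => Multiplicative ℤ) k).comp
          ((MonoidHom.fst _ _).comp (E.toMonoidHom.comp φ.rangeRestrict)))
    obtain ⟨h, hh⟩ := φ.rangeRestrict_surjective
      (E.symm ((fun _ => Multiplicative.ofAdd 1), 1))
    have := hom0 f h
    simp [f, hh] at this
  haveI : ∀ i, NeZero (p i ^ e i) := fun i => ⟨pow_ne_zero _ (hp i).ne_zero⟩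
  haveI : ∀ i, Finite (Multiplicative (ZMod (p i ^ e i))) := fun i =>
    inferInstanceAs (Finite (ZMod (p i ^ e i)))
  haveI : Finite φ.range := Finite.of_equiv _ E.symm.toEquiv
  exact Subgroup.finiteIndex_ker φ

theorem caseB {H : Type*} [Group H] [Group.FG H]
    (hom0 : ∀ f : H →* Multiplicative ℝ, ∀ g, f g = 1) (ρ : H →* Equiv.Perm 𝕊)
    (hρ : ∀ h, IsOPHomeo (ρ h)) (x0 : 𝕊)
    (hfix : ∀ h, (∃ y, ρ h y = y) → ρ h x0 = x0) :
    ∃ N : Subgroup H, N.FiniteIndex ∧ ∃ x, ∀ g ∈ N, ρ g x = x := by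
  choose F hF using hρ
  let φ : H →* Multiplicative 𝕊 := MonoidHom.mk'
    (fun h => Multiplicative.ofAdd (((hF h).deg.translationNumber : ℝ) : 𝕊)) (by
      intro a b
      rw [← ofAdd_add, ← AddCircle.coe_add, ← trans_add ρ (fun h => ⟨F h, hF h⟩) x0 hfix a b _ _ (hF a) (hF b)]
      have h1 := (hF a).comp (hF b)
      rw [← map_mul] at h1
      obtain ⟨n, hn⟩ := h1.diff (hF (a * b))
      rw [trans_add_int (A := (hF a).deg * (hF b).deg) (B := (hF (a * b)).deg) n hn]
      congr 1
      exact ((circ_coe_eq _ _).2 ⟨n, rfl⟩).symm)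
  refine ⟨φ.ker, ker_finiteIndex_of_hom0 hom0 φ, x0, fun h hh => hfix h ?_⟩
  have h1 : (((hF h).deg.translationNumber : ℝ) : 𝕊) = ((0 : ℝ) : 𝕊) := hh
  obtain ⟨n, hn⟩ := (circ_coe_eq _ _).1 h1.symm
  rw [zero_add] at hn
  obtain ⟨y, hy⟩ := ((hF h).deg.translationNumber_eq_int_iff (hF h).1).1 hn
  refine ⟨y, ?_⟩
  rw [(hF h).2.2.2]
  exact ((circ_coe_eq _ _).2 ⟨n, hy⟩).symm

theorem caseA {G : Type*} [Group G] (ρ : G →* Equiv.Perm 𝕊)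
    (hρ : ∀ h, IsOPHomeo (ρ h)) (C1 C2 : Set 𝕊) (c1 : IsClosed C1) (c2 : IsClosed C2)
    (n1 : C1.Nonempty) (n2 : C2.Nonempty) (i1 : ∀ g, ∀ x ∈ C1, ρ g x ∈ C1)
    (i2 : ∀ g, ∀ x ∈ C2, ρ g x ∈ C2) (hd : C1 ∩ C2 = ∅) :
    ∃ N : Subgroup G, N.FiniteIndex ∧ ∃ x, ∀ g ∈ N, ρ g x = x := by
  choose F hF using hρ
  have hco : Continuous (fun x : ℝ => (x : 𝕊)) := AddCircle.continuous_mk' 1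
  set D1 : Set ℝ := {x | (x : 𝕊) ∈ C1} with hD1
  set D2 : Set ℝ := {x | (x : 𝕊) ∈ C2} with hD2
  have d1 : IsClosed D1 := c1.preimage hco
  have d2 : IsClosed D2 := c2.preimage hco
  have sh : ∀ (x : ℝ) (n : ℤ), ((x + n : ℝ) : 𝕊) = x := fun x n =>
    ((circ_coe_eq _ _).2 ⟨n, rfl⟩).symm
  have hleast : ∀ x : ℝ, ∃ r, IsLeast (D2 ∩ Set.Ici x) r := by
    intro x
    obtain ⟨y, hy⟩ := n2
    obtain ⟨t, rfl⟩ := circ_ind y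
    refine ⟨_, (d2.inter isClosed_Ici).isLeast_csInf ⟨t + (⌈x - t⌉ : ℤ), ?_, ?_⟩ ⟨x, fun z hz => hz.2⟩⟩
    · change ((t + (⌈x - t⌉ : ℤ) : ℝ) : 𝕊) ∈ C2
      rwa [sh]
    · simp only [Set.mem_Ici]; linarith [Int.le_ceil (x - t)]
  choose r hr using hleast
  have req : ∀ g x, r (F g x) = F g (r x) := by
    intro g x
    refine (hr (F g x)).unique ⟨⟨?_, ?_⟩, ?_⟩
    · change ((F g (r x) : ℝ) : 𝕊) ∈ C2
      rw [← (hF g).2.2.2]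
      exact i2 g _ (hr x).1.1
    · exact (hF g).2.1.monotone (hr x).1.2
    · rintro z ⟨hz1, hz2⟩
      obtain ⟨w, rfl⟩ := ((hF g).deg.continuous_iff_surjective.1 (hF g).1) z
      rw [deg_apply] at *
      refine (hF g).2.1.monotone ((hr x).2 ⟨?_, (hF g).2.1.le_iff_le.1 hz2⟩)
      have h3 : ((F g w : ℝ) : 𝕊) ∈ C2 := hz1
      rw [← (hF g).2.2.2] at h3
      have := i2 g⁻¹ _ h3
      change (w : 𝕊) ∈ C2
      simpa using this
  have rper : ∀ x (n : ℤ), r (x + n) = r x + n := by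
    intro x n
    refine (hr (x + n)).unique ⟨⟨?_, ?_⟩, ?_⟩
    · change ((r x + n : ℝ) : 𝕊) ∈ C2
      rw [sh]; exact (hr x).1.1
    · have := (hr x).1.2
      simp only [Set.mem_Ici] at *; linarith
    · rintro z ⟨hz1, hz2⟩
      have hm : z + ((-n : ℤ) : ℝ) ∈ D2 ∩ Set.Ici x := ⟨by
        change ((z + (-n : ℤ) : ℝ) : 𝕊) ∈ C2
        rw [sh]; exact hz1, by simp only [Set.mem_Ici] at *; push_cast; linarith⟩
      have := (hr x).2 hm
      push_cast at this
      linarith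
  set Q : Set 𝕊 := (fun x => ((r x : ℝ) : 𝕊)) '' (D1 ∩ Set.Icc 0 1) with hQ
  have hQfin : Q.Finite := by
    have hK : IsCompact (D1 ∩ Set.Icc (0 : ℝ) 1) := isCompact_Icc.inter_left d1
    refine hK.induction_on (p := fun s => ((fun x => ((r x : ℝ) : 𝕊)) '' s).Finite) (by simp)
      (fun s t hst ht => ht.subset (Set.image_mono hst))
      (fun s t hs ht => by rw [Set.image_union]; exact hs.union ht) ?_
    intro x hx
    have hx2 : x ∈ D2ᶜ := by
      intro h
      have : (x : 𝕊) ∈ C1 ∩ C2 := ⟨hx.1, h⟩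
      rw [hd] at this; exact this
    obtain ⟨ε, hε, hball⟩ := Metric.isOpen_iff.1 d2.isOpen_compl x hx2
    refine ⟨Metric.ball x ε, mem_nhdsWithin_of_mem_nhds (Metric.ball_mem_nhds x hε), ?_⟩
    refine (Set.finite_singleton ((r x : ℝ) : 𝕊)).subset ?_
    rintro _ ⟨y, hy, rfl⟩
    have : D2 ∩ Set.Ici y = D2 ∩ Set.Ici x := by
      ext z
      simp only [Set.mem_inter_iff, Set.mem_Ici, and_congr_right_iff]
      intro hz
      have h1 : ε ≤ |z - x| := by
        by_contra hc
        exact hball (show z ∈ Metric.ball x ε by rw [Metric.mem_ball, Real.dist_eq]; linarith) hz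
      have h2 : |y - x| < ε := by rwa [Metric.mem_ball, Real.dist_eq] at hy
      rw [abs_lt] at h2
      rcases le_abs.1 h1 with h | h
      · constructor <;> intro <;> linarith
      · constructor <;> intro <;> linarith
    have h3 := hr y
    rw [this] at h3
    simp [h3.unique (hr x)]
  have hfr : ∀ x ∈ D1, ((r x : ℝ) : 𝕊) ∈ Q := by
    intro x hx
    refine ⟨x + (-⌊x⌋ : ℤ), ⟨?_, ?_⟩, ?_⟩
    · change ((x + (-⌊x⌋ : ℤ) : ℝ) : 𝕊) ∈ C1
      rw [sh]; exact hx
    · push_cast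
      exact ⟨by linarith [Int.floor_le x], by linarith [Int.lt_floor_add_one x]⟩
    · beta_reduce
      rw [rper, sh]
  obtain ⟨y, hy⟩ := n1
  obtain ⟨t, rfl⟩ := circ_ind y
  letI : MulAction G 𝕊 := MulAction.compHom 𝕊 ρ
  have hsm : ∀ (g : G) (x : 𝕊), g • x = ρ g x := fun _ _ => rfl
  refine ⟨MulAction.stabilizer G ((r t : ℝ) : 𝕊), ⟨?_⟩, ((r t : ℝ) : 𝕊), fun g hg => hg⟩
  rw [MulAction.index_stabilizer]
  have hsub : MulAction.orbit G ((r t : ℝ) : 𝕊) ⊆ Q := by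
    rintro _ ⟨g, rfl⟩
    change ρ g ((r t : ℝ) : 𝕊) ∈ Q
    rw [(hF g).2.2.2, ← req]
    apply hfr
    change ((F g t : ℝ) : 𝕊) ∈ C1
    rw [← (hF g).2.2.2]
    exact i1 g _ hy
  exact Set.ncard_ne_zero_of_mem (MulAction.mem_orbit_self _) (hQfin.subset hsub)

theorem IsOPHomeo.cont {f : Equiv.Perm 𝕊} (h : IsOPHomeo f) : Continuous f := by
  obtain ⟨F, hF⟩ := h
  have hq : IsQuotientMap (fun x : ℝ => (x : 𝕊)) := isQuotientMap_quotient_mk'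
  rw [hq.continuous_iff]
  have : (f ∘ fun x : ℝ => (x : 𝕊)) = fun x => ((F x : ℝ) : 𝕊) := by
    funext x; exact hF.2.2.2 x
  rw [this]
  exact (AddCircle.continuous_mk' 1).comp hF.1

theorem circle_main {G1 G2 : Type*} [Group G1] [Group G2] [Group.FG G2]
    (hom0 : ∀ f : G2 →* Multiplicative ℝ, ∀ g, f g = 1)
    (ρ1 : G1 →* Equiv.Perm 𝕊) (ρ2 : G2 →* Equiv.Perm 𝕊)
    (h1 : ∀ g, IsOPHomeo (ρ1 g)) (h2 : ∀ g, IsOPHomeo (ρ2 g))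
    (comm : ∀ a b x, ρ1 a (ρ2 b x) = ρ2 b (ρ1 a x)) :
    (∃ N : Subgroup G1, N.FiniteIndex ∧ ∃ x, ∀ g ∈ N, ρ1 g x = x) ∨
    (∃ N : Subgroup G2, N.FiniteIndex ∧ ∃ x, ∀ g ∈ N, ρ2 g x = x) := by
  by_cases hA : ∃ C1 C2 : Set 𝕊, IsClosed C1 ∧ IsClosed C2 ∧ C1.Nonempty ∧ C2.Nonempty ∧
      (∀ g, ∀ x ∈ C1, ρ1 g x ∈ C1) ∧ (∀ g, ∀ x ∈ C2, ρ1 g x ∈ C2) ∧ C1 ∩ C2 = ∅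
  · obtain ⟨C1, C2, a, b, c, d, e, f, g⟩ := hA
    exact Or.inl (caseA ρ1 h1 C1 C2 a b c d e f g)
  · right
    let S : Set (Set 𝕊) := {C | IsClosed C ∧ C.Nonempty ∧ ∀ g, ∀ x ∈ C, ρ1 g x ∈ C}
    haveI : Nonempty S := ⟨⟨Set.univ, isClosed_univ, Set.univ_nonempty, fun _ _ _ => trivial⟩⟩
    have hx : (⋂₀ S).Nonempty := by
      refine IsCompact.nonempty_sInter_of_directed_nonempty_isCompact_isClosed ?_
        (fun U hU => hU.2.1) (fun U hU => hU.1.isCompact) (fun U hU => hU.1)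
      intro A hA1 B hB1
      refine ⟨A ∩ B, ⟨hA1.1.inter hB1.1, ?_, ?_⟩, Set.inter_subset_left, Set.inter_subset_right⟩
      · by_contra hne
        rw [Set.not_nonempty_iff_eq_empty] at hne
        exact hA ⟨A, B, hA1.1, hB1.1, hA1.2.1, hB1.2.1, hA1.2.2, hB1.2.2, hne⟩
      · exact fun g x hx => ⟨hA1.2.2 g x hx.1, hB1.2.2 g x hx.2⟩
    obtain ⟨x0, hx0⟩ := hx
    refine caseB hom0 ρ2 h2 x0 ?_
    intro h hy
    refine hx0 {y | ρ2 h y = y} ⟨isClosed_eq (h2 h).cont continuous_id, hy, ?_⟩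
    intro g x hx
    have hx' : ρ2 h x = x := hx
    change ρ2 h (ρ1 g x) = ρ1 g x
    rw [← comm, hx']

theorem exists_pow_mem_fi {E : Type*} [Group E] (K : Subgroup E) [K.FiniteIndex] [K.Normal] (d : E) :
    ∃ m : ℕ, 0 < m ∧ d ^ m ∈ K :=
  ⟨K.index, Nat.pos_of_ne_zero Subgroup.FiniteIndex.index_ne_zero, K.pow_index_mem d⟩

theorem recur_step {E : Type*} [Group E] (K : Subgroup E) [K.FiniteIndex] [hK : K.Normal] (d e : E)
    (hgen : Subgroup.closure ({d, e} : Set E) = ⊤) (a A B : E → ℝ)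
    (ha : ∀ g, ∀ k ∈ K, a (g * k) = a g)
    (hA : ∀ g, ∀ k ∈ K, A (g * k) = A g) (hB : ∀ g, ∀ k ∈ K, B (g * k) = B g)
    (hAd : ∀ g, A (d * g) = A g) (hBd : ∀ g, B (d * g) = B g)
    (hAe : ∀ g, A (e * g) = A g + a g) (hBe : ∀ g, B (e * g) = B g + a (d * g)) :
    ∀ g, a (d * g) = a g := by
  set D : E → ℝ := fun g => B g - A g with hD
  have Dk : ∀ g, ∀ k ∈ K, D (g * k) = D g := fun g k hk => by simp only [hD, hA g k hk, hB g k hk]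
  have kl : ∀ (f : E → ℝ), (∀ g, ∀ k ∈ K, f (g * k) = f g) → ∀ k ∈ K, ∀ g, f (k * g) = f g := by
    intro f hf k hk g
    have : k * g = g * (g⁻¹ * k * g) := by group
    rw [this]
    refine hf _ _ ?_
    have := hK.conj_mem k hk g⁻¹
    simpa using this
  have Dd : ∀ g, D (d * g) = D g := fun g => by simp only [hD, hAd, hBd]
  have Ddj : ∀ (j : ℕ) g, D (d ^ j * g) = D g := by
    intro j
    induction j with
    | zero => intro g; simp
    | succ j ih => intro g; rw [pow_succ', mul_assoc, Dd, ih]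
  have De : ∀ g, D (e * g) - D g = a (d * g) - a g := fun g => by simp only [hD, hAe, hBe]; ring
  obtain ⟨m, hm0, hm⟩ := exists_pow_mem_fi K d
  have hsum : ∀ g, ∑ j ∈ Finset.range m, (D (e * (d ^ j * g)) - D g) = 0 := by
    intro g
    have : ∀ j ∈ Finset.range m, D (e * (d ^ j * g)) - D g = a (d ^ (j + 1) * g) - a (d ^ j * g) := by
      intro j _
      have := De (d ^ j * g)
      rw [Ddj] at this
      rw [this, pow_succ', mul_assoc]
    rw [Finset.sum_congr rfl this, Finset.sum_range_sub (fun j => a (d ^ j * g)), kl a ha _ hm]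
    simp
  -- the maximum
  have hfinr : (Set.range D).Finite := by
    have : Set.range D ⊆ Set.range (fun c : E ⧸ K => D c.out) := by
      rintro _ ⟨g, rfl⟩
      refine ⟨(g : E ⧸ K), ?_⟩
      obtain ⟨k, hk⟩ := QuotientGroup.mk_out_eq_mul K g
      simp only [hk]
      exact Dk _ _ k.2
    exact (Set.finite_range _).subset this
  obtain ⟨g0, hg0⟩ : ∃ g0, ∀ g, D g ≤ D g0 := by
    obtain ⟨_, ⟨g0, rfl⟩, h⟩ := Set.exists_max_image (Set.range D) id hfinr ⟨_, 1, rfl⟩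
    exact ⟨g0, fun g => h _ ⟨g, rfl⟩⟩
  have De0 : ∀ g, D g = D g0 → D (e * g) = D g0 := by
    intro g hg
    have h1 := hsum g
    have h2 : ∀ j ∈ Finset.range m, D (e * (d ^ j * g)) - D g ≤ 0 := by
      intro j _; rw [hg]; linarith [hg0 (e * (d ^ j * g))]
    have h3 := (Finset.sum_eq_zero_iff_of_nonpos h2).1 h1 0 (Finset.mem_range.2 hm0)
    rw [pow_zero, one_mul] at h3
    linarith
  have key : ∀ x : E, ∀ g, D g = D g0 → D (x * g) = D g0 := by
    intro x
    have hx : x ∈ Subgroup.closure ({d, e} : Set E) := by rw [hgen]; trivial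
    induction hx using Subgroup.closure_induction with
    | mem x hx =>
      rcases hx with rfl | rfl
      · intro g hg; rw [Dd, hg]
      · exact De0
    | one => intro g hg; rwa [one_mul]
    | mul x y _ _ h1 h2 => intro g hg; rw [mul_assoc]; exact h1 _ (h2 _ hg)
    | inv x _ h =>
      intro g hg
      obtain ⟨l, hl0, hl⟩ := exists_pow_mem_fi K x
      have hp : ∀ (j : ℕ) g, D g = D g0 → D (x ^ j * g) = D g0 := by
        intro j
        induction j with
        | zero => intro g hg; simpa using hg
        | succ j ih => intro g hg; rw [pow_succ', mul_assoc]; exact h _ (ih _ hg)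
      have e1 : x⁻¹ * g = (x ^ l)⁻¹ * (x ^ (l - 1) * g) := by
        obtain ⟨l', rfl⟩ := Nat.exists_eq_succ_of_ne_zero hl0.ne'
        rw [Nat.succ_eq_add_one, Nat.add_sub_cancel, pow_succ]
        group
      rw [e1, kl D Dk _ (K.inv_mem hl)]
      exact hp _ _ hg
  have Dc : ∀ g, D g = D g0 := by
    intro g
    have := key (g * g0⁻¹) g0 rfl
    simpa using this
  intro g
  have := De g
  rw [Dc, Dc g] at this
  linarith

theorem recur_zero {E : Type*} [Group E] (K : Subgroup E) [K.FiniteIndex] [hK : K.Normal] (d e : E)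
    (hgen : Subgroup.closure ({d, e} : Set E) = ⊤) (a A B A' B' : E → ℝ)
    (ha : ∀ g, ∀ k ∈ K, a (g * k) = a g)
    (hA : ∀ g, ∀ k ∈ K, A (g * k) = A g) (hB : ∀ g, ∀ k ∈ K, B (g * k) = B g)
    (hA' : ∀ g, ∀ k ∈ K, A' (g * k) = A' g) (hB' : ∀ g, ∀ k ∈ K, B' (g * k) = B' g)
    (hAd : ∀ g, A (d * g) = A g) (hBd : ∀ g, B (d * g) = B g)
    (hAe : ∀ g, A (e * g) = A g + a g) (hBe : ∀ g, B (e * g) = B g + a (d * g))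
    (hAd' : ∀ g, A' (e * g) = A' g) (hBd' : ∀ g, B' (e * g) = B' g)
    (hAe' : ∀ g, A' (d * g) = A' g + a g) (hBe' : ∀ g, B' (d * g) = B' g + a (e * g)) :
    ∀ g, a g = 0 := by
  have h1 := recur_step K d e hgen a A B ha hA hB hAd hBd hAe hBe
  have h2 := recur_step K e d (by rw [Set.pair_comm]; exact hgen) a A' B' ha hA' hB' hAd' hBd' hAe' hBe'
  have key : ∀ x g, a (x * g) = a g := by
    intro x
    have hx : x ∈ Subgroup.closure ({d, e} : Set E) := by rw [hgen]; trivial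
    induction hx using Subgroup.closure_induction with
    | mem x hx =>
      rcases hx with rfl | rfl
      · exact h1
      · exact h2
    | one => intro g; rw [one_mul]
    | mul x y _ _ h1 h2 => intro g; rw [mul_assoc, h1, h2]
    | inv x _ h => intro g; have := h (x⁻¹ * g); rw [mul_inv_cancel_left] at this; exact this.symm
  have hc : ∀ g, a g = a 1 := fun g => by have := key g 1; rwa [mul_one] at this
  obtain ⟨m, hm0, hm⟩ := exists_pow_mem_fi K e
  have hp : ∀ j : ℕ, A (e ^ j) = A 1 + j * a 1 := by
    intro j
    induction j with
    | zero => simp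
    | succ j ih => rw [pow_succ', hAe, ih, hc (e ^ j)]; push_cast; ring
  have h3 := hA 1 _ hm
  rw [one_mul, hp] at h3
  have h4 : (m : ℝ) * a 1 = 0 := by linarith
  have h5 : a 1 = 0 := by
    rcases mul_eq_zero.1 h4 with h | h
    · exact absurd h (by exact_mod_cast hm0.ne')
    · exact h
  intro g
  rw [hc, h5]

abbrev EE : Type := FreeGroup Bool

def kill {n : ℕ} (i : Fin n) : FreeGrp n →* FreeGrp n :=
  FreeGroup.lift (fun j => if j = i then 1 else FreeGroup.of j)

def JJ {n : ℕ} (α : Bool → Fin n) : EE →* FreeGrp n := FreeGroup.map α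

def rEnd {n : ℕ} (i : Fin n) (v : FreeGrp n) : FreeGrp n →* FreeGrp n :=
  FreeGroup.lift (fun j => if j = i then FreeGroup.of i * kill i v else FreeGroup.of j)

theorem JJ_of {n : ℕ} (α : Bool → Fin n) (s : Bool) : JJ α (FreeGroup.of s) = FreeGroup.of (α s) := by
  simp [JJ]

theorem kill_self {n : ℕ} (i : Fin n) : kill i (FreeGroup.of i) = 1 := by simp [kill]

theorem kill_of {n : ℕ} {i j : Fin n} (h : j ≠ i) : kill i (FreeGroup.of j) = FreeGroup.of j := by
  simp [kill, h]

theorem rEnd_self {n : ℕ} (i : Fin n) (v) :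
    rEnd i v (FreeGroup.of i) = FreeGroup.of i * kill i v := by simp [rEnd]

theorem rEnd_of {n : ℕ} {i j : Fin n} (h : j ≠ i) (v) :
    rEnd i v (FreeGroup.of j) = FreeGroup.of j := by simp [rEnd, h]

theorem kill_kill {n : ℕ} (i : Fin n) (v : FreeGrp n) : kill i (kill i v) = kill i v := by
  have : (kill i).comp (kill i) = kill i := by
    refine FreeGroup.ext_hom _ _ fun j => ?_
    by_cases h : j = i
    · subst h; simp [kill_self]
    · simp [kill_of h]
  exact DFunLike.congr_fun this v

theorem kill_JJ {n : ℕ} {i : Fin n} {α : Bool → Fin n} (h : ∀ s, α s ≠ i) (u : EE) :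
    kill i (JJ α u) = JJ α u := by
  have : (kill i).comp (JJ α) = JJ α := by
    refine FreeGroup.ext_hom _ _ fun s => ?_
    simp [JJ_of, kill_of (h s)]
  exact DFunLike.congr_fun this u

theorem rEnd_kill {n : ℕ} (i : Fin n) (v w : FreeGrp n) : rEnd i v (kill i w) = kill i w := by
  have : (rEnd i v).comp (kill i) = kill i := by
    refine FreeGroup.ext_hom _ _ fun j => ?_
    by_cases h : j = i
    · subst h; simp [kill_self]
    · simp [kill_of h, rEnd_of h]
  exact DFunLike.congr_fun this w

theorem rEnd_of_free {n : ℕ} {i : Fin n} (v : FreeGrp n) {w : FreeGrp n} (hw : kill i w = w) :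
    rEnd i v w = w := by
  have := rEnd_kill i v w
  rwa [hw] at this

theorem rEnd_mul {n : ℕ} (i : Fin n) (v w : FreeGrp n) :
    (rEnd i v).comp (rEnd i w) = rEnd i (v * w) := by
  refine FreeGroup.ext_hom _ _ fun j => ?_
  by_cases h : j = i
  · subst h; simp [rEnd_self, rEnd_kill, mul_assoc]
  · simp [rEnd_of h]

theorem rEnd_one {n : ℕ} (i : Fin n) : rEnd i (1 : FreeGrp n) = MonoidHom.id _ := by
  refine FreeGroup.ext_hom _ _ fun j => ?_
  by_cases h : j = i
  · subst h; simp [rEnd_self]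
  · simp [rEnd_of h]

def RR {n : ℕ} (i : Fin n) : FreeGrp n →* AutF n where
  toFun v := MonoidHom.toMulEquiv (rEnd i v) (rEnd i v⁻¹)
    (by rw [rEnd_mul, inv_mul_cancel, rEnd_one]) (by rw [rEnd_mul, mul_inv_cancel, rEnd_one])
  map_one' := by
    ext x
    simp [rEnd_one]
  map_mul' v w := by
    ext x
    simp [← rEnd_mul]

theorem RR_apply {n : ℕ} (i : Fin n) (v x : FreeGrp n) : RR i v x = rEnd i v x := rfl

/-- conjugation formula -/
theorem RR_conj {n : ℕ} {e t : Fin n} (het : e ≠ t) {w v : FreeGrp n} (hw : kill t w = w)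
    (hwe : kill e w = w) (hv : kill t v = v) :
    RR e w * RR t v = RR t (rEnd e w v) * RR e w := by
  have hcomm : (kill t).comp (rEnd e w) = (rEnd e w).comp (kill t) := by
    refine FreeGroup.ext_hom _ _ fun j => ?_
    by_cases h : j = t
    · subst h; simp [kill_self, rEnd_of het.symm]
    · by_cases h2 : j = e
      · subst h2; simp [kill_of h, rEnd_self, hwe, hw]
      · simp [kill_of h, rEnd_of h2]
  have hc : ∀ x, kill t (rEnd e w x) = rEnd e w (kill t x) := DFunLike.congr_fun hcomm
  have : (rEnd e w).comp (rEnd t v) = (rEnd t (rEnd e w v)).comp (rEnd e w) := by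
    refine FreeGroup.ext_hom _ _ fun j => ?_
    by_cases h : j = t
    · subst h
      simp [rEnd_self, rEnd_of het.symm, hc, hv]
    · simp only [MonoidHom.comp_apply, rEnd_of h]
      exact (rEnd_of_free _ (by rw [hc, kill_of h])).symm
  ext x
  exact DFunLike.congr_fun this x

def PiO (n : ℕ) : AutF n →* OutF n := QuotientGroup.mk' (InnF n)

def PP {n : ℕ} (i : Fin n) : FreeGrp n →* OutF n := (PiO n).comp (RR i)

theorem PP_conj {n : ℕ} {e t : Fin n} (het : e ≠ t) {w v : FreeGrp n} (hw : kill t w = w)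
    (hwe : kill e w = w) (hv : kill t v = v) :
    PP e w * PP t v = PP t (rEnd e w v) * PP e w := by
  simp only [PP, MonoidHom.comp_apply, ← map_mul]
  rw [RR_conj het hw hwe hv]

theorem PP_nontriv {n : ℕ} {i a : Fin n} (hia : a ≠ i) (m : ℕ) (hm : m ≠ 0) :
    PP i (FreeGroup.of a ^ m) ≠ 1 := by
  intro h
  have h1 : RR i (FreeGroup.of a ^ m) ∈ InnF n := by
    have : (QuotientGroup.mk' (InnF n)) (RR i (FreeGroup.of a ^ m)) = 1 := h
    rwa [QuotientGroup.mk'_apply, QuotientGroup.eq_one_iff] at this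
  obtain ⟨g, hg⟩ := h1
  have h2 : g * FreeGroup.of i * g⁻¹ = FreeGroup.of i * FreeGroup.of a ^ m := by
    have := DFunLike.congr_fun hg (FreeGroup.of i)
    rw [MulAut.conj_apply, RR_apply, rEnd_self, map_pow, kill_of hia] at this
    exact this
  let c : FreeGrp n →* Multiplicative ℤ :=
    FreeGroup.lift (fun j => if j = a then Multiplicative.ofAdd 1 else 1)
  have h3 := congrArg c h2
  rw [map_mul, map_mul, map_mul, map_pow, map_inv, mul_comm (c g), mul_assoc, mul_inv_cancel,
    mul_one] at h3
  have h4 : c (FreeGroup.of a) ^ m = 1 := by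
    have := h3.symm
    rwa [mul_eq_left] at this
  have h5 : c (FreeGroup.of a) = Multiplicative.ofAdd 1 := by simp [c]
  rw [h5, ← ofAdd_nsmul] at h4
  have h6 : m • (1 : ℤ) = 0 := h4
  simp at h6
  exact hm h6

structure OKT {n : ℕ} (I : Set (Fin n)) (i : Fin n) (α β : Bool → Fin n) : Prop where
  hi : i ∈ I
  ha : ∀ s, α s ∈ I
  hb : ∀ s, β s ∈ I
  aa : α true ≠ α false
  bb : β true ≠ β false
  ab : ∀ s s', α s ≠ β s'
  ia : ∀ s, α s ≠ i
  ib : ∀ s, β s ≠ i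

theorem OKT.swap {n : ℕ} {I : Set (Fin n)} {i : Fin n} {α β : Bool → Fin n} (h : OKT I i α β) :
    OKT I i β α :=
  ⟨h.hi, h.hb, h.ha, h.bb, h.aa, fun s s' => (h.ab s' s).symm, h.ib, h.ia⟩

def gam {n : ℕ} (i j : Fin n) : Bool → Fin n := fun s => if s then j else i

theorem OKT.bne {n : ℕ} {I : Set (Fin n)} {i : Fin n} {α β : Bool → Fin n} (h : OKT I i α β) (s) :
    β (!s) ≠ β s := by
  cases s
  · exact h.bb
  · exact h.bb.symm

theorem OKT.rot {n : ℕ} {I : Set (Fin n)} {i : Fin n} {α β : Bool → Fin n} (h : OKT I i α β)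
    (s : Bool) : OKT I (β s) α (gam i (β (!s))) := by
  refine ⟨h.hb s, h.ha, ?_, h.aa, ?_, ?_, fun s' => h.ab s' s, ?_⟩
  · intro s'; cases s' <;> simp [gam, h.hi, h.hb]
  · simp [gam, h.ib]
  · intro s1 s2; cases s2 <;> simp [gam, h.ia, h.ab]
  · intro s'; cases s'
    · simpa [gam] using (h.ib s).symm
    · simpa [gam] using h.bne s

def th {n : ℕ} (i : Fin n) (α β : Bool → Fin n) (q : EE) : EE →* OutF n where
  toFun u := PP i ((JJ β q)⁻¹ * JJ α u * JJ β q)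
  map_one' := by simp
  map_mul' u v := by rw [← map_mul]; congr 1; simp [mul_assoc]

theorem th_apply {n : ℕ} (i : Fin n) (α β : Bool → Fin n) (q u : EE) :
    th i α β q u = PP i ((JJ β q)⁻¹ * JJ α u * JJ β q) := rfl

theorem th_one {n : ℕ} (i : Fin n) (α β : Bool → Fin n) (u : EE) :
    th i α β 1 u = PP i (JJ α u) := by simp [th_apply]

theorem th_mul {n : ℕ} (i : Fin n) (α β : Bool → Fin n) (q k u : EE) :
    th i α β (q * k) u = (th i β α 1 k)⁻¹ * th i α β q u * th i β α 1 k := by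
  rw [th_one, th_apply, th_apply]
  simp [mul_assoc]

def GS {n : ℕ} (I : Set (Fin n)) (Q : Set EE) (U : Set EE) : Set (OutF n) :=
  {x | ∃ i α β, OKT I i α β ∧ ∃ q ∈ Q, ∃ u ∈ U, x = th i α β q u}

def GG {n : ℕ} (I : Set (Fin n)) (K : Subgroup EE) : Subgroup (OutF n) :=
  Subgroup.closure (GS I Set.univ K)

theorem th_mem {n : ℕ} {I : Set (Fin n)} {K : Subgroup EE} {i : Fin n} {α β : Bool → Fin n}
    (h : OKT I i α β) (q : EE) {u : EE} (hu : u ∈ K) : th i α β q u ∈ GG I K :=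
  Subgroup.subset_closure ⟨i, α, β, h, q, trivial, u, hu, rfl⟩

theorem PP_mem {n : ℕ} {I : Set (Fin n)} {K : Subgroup EE} {i : Fin n} {α β : Bool → Fin n}
    (h : OKT I i α β) {u : EE} (hu : u ∈ K) : PP i (JJ α u) ∈ GG I K := by
  rw [← th_one i α β]; exact th_mem h 1 hu

theorem PP_mem' {n : ℕ} {I : Set (Fin n)} {K : Subgroup EE} {i : Fin n} {α β : Bool → Fin n}
    (h : OKT I i α β) {u : EE} (hu : u ∈ K) : PP i (JJ β u) ∈ GG I K := PP_mem h.swap hu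

theorem EE_gen : Subgroup.closure ({FreeGroup.of true, FreeGroup.of false} : Set EE) = ⊤ := by
  rw [← FreeGroup.closure_range_of]
  congr 1
  ext x
  simp only [Set.mem_insert_iff, Set.mem_singleton_iff, Set.mem_range, Bool.exists_bool]
  constructor
  · rintro (h | h)
    · exact Or.inr h.symm
    · exact Or.inl h.symm
  · rintro (h | h)
    · exact Or.inr h.symm
    · exact Or.inl h.symm

theorem GG_fg {n : ℕ} (I : Set (Fin n)) (K : Subgroup EE) [K.FiniteIndex] : (GG I K).FG := by
  have hKfg : K.FG := (Group.fg_iff_subgroup_fg K).1 (Subgroup.fg_of_index_ne_zero K)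
  obtain ⟨U, hU, hUf⟩ := (Subgroup.fg_iff K).1 hKfg
  let Q : Set EE := insert 1 (Set.range (fun c : EE ⧸ K => c.out))
  have hQ : Q.Finite := (Set.finite_range _).insert _
  rw [Subgroup.fg_iff]
  refine ⟨GS I Q U, le_antisymm ?_ ?_, ?_⟩
  · rw [Subgroup.closure_le]
    rintro _ ⟨i, α, β, h, q, -, u, hu, rfl⟩
    exact th_mem h q (hU ▸ Subgroup.subset_closure hu)
  · have s1 : ∀ i α β, OKT I i α β → ∀ q ∈ Q, ∀ u ∈ K, th i α β q u ∈ Subgroup.closure (GS I Q U) := by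
      intro i α β h q hq u hu
      rw [← Subgroup.mem_comap]
      revert u
      change K ≤ _
      rw [← hU, Subgroup.closure_le]
      intro u hu
      exact Subgroup.subset_closure ⟨i, α, β, h, q, hq, u, hu, rfl⟩
    rw [GG, Subgroup.closure_le]
    rintro _ ⟨i, α, β, h, q, -, u, hu, rfl⟩
    obtain ⟨k, hk⟩ := QuotientGroup.mk_out_eq_mul K q
    have e : q = (q : EE ⧸ K).out * (k : EE)⁻¹ := by rw [hk]; group
    rw [e, th_mul]
    have m1 := s1 i β α h.swap 1 (Set.mem_insert _ _) _ (K.inv_mem k.2)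
    exact mul_mem (mul_mem (inv_mem m1) (s1 i α β h _ (Set.mem_insert_of_mem _ ⟨_, rfl⟩) u hu)) m1
  · have : GS I Q U ⊆ ⋃ i : Fin n, ⋃ α : Bool → Fin n, ⋃ β : Bool → Fin n,
        (fun p : EE × EE => th i α β p.1 p.2) '' (Q ×ˢ U) := by
      rintro _ ⟨i, α, β, h, q, hq, u, hu, rfl⟩
      simp only [Set.mem_iUnion]
      exact ⟨i, α, β, (q, u), ⟨hq, hu⟩, rfl⟩
    refine Set.Finite.subset ?_ this
    exact Set.finite_iUnion fun i => Set.finite_iUnion fun α => Set.finite_iUnion fun β =>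
      (hQ.prod hUf).image _

def Good {n : ℕ} (I : Set (Fin n)) (Λ : Subgroup (OutF n)) : Prop :=
  ∀ i α β, OKT I i α β → ∀ q, (Λ.comap (th i α β q)).FiniteIndex

theorem Good.exists_K {n : ℕ} {I : Set (Fin n)} {Λ : Subgroup (OutF n)} (h : Good I Λ) :
    ∃ K : Subgroup EE, K.FiniteIndex ∧ K.Normal ∧ GG I K ≤ Λ := by
  let T := {p : Fin n × (Bool → Fin n) × (Bool → Fin n) // OKT I p.1 p.2.1 p.2.2}
  let K0 : Subgroup EE := (⨅ p : T, Λ.comap (th p.1.1 p.1.2.1 p.1.2.2 1))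
  haveI h0 : K0.FiniteIndex := Subgroup.finiteIndex_iInf fun p => h _ _ _ p.2 1
  have m0 : ∀ i α β, OKT I i α β → ∀ k ∈ K0, th i α β 1 k ∈ Λ := by
    intro i α β hp k hk
    exact (Subgroup.mem_iInf.1 hk ⟨(i, α, β), hp⟩ : _)
  let K1 : Subgroup EE := ⨅ p : T × (EE ⧸ K0), Λ.comap (th p.1.1.1 p.1.1.2.1 p.1.1.2.2 p.2.out)
  haveI h1 : K1.FiniteIndex := Subgroup.finiteIndex_iInf fun p => h _ _ _ p.1.2 _
  refine ⟨K1.normalCore, inferInstance, inferInstance, ?_⟩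
  rw [GG, Subgroup.closure_le]
  rintro _ ⟨i, α, β, hp, q, -, u, hu, rfl⟩
  have hu1 : u ∈ K1 := Subgroup.normalCore_le _ hu
  obtain ⟨k, hk⟩ := QuotientGroup.mk_out_eq_mul K0 q
  have e : q = (q : EE ⧸ K0).out * (k : EE)⁻¹ := by rw [hk]; group
  rw [e, th_mul]
  have m1 := m0 i β α hp.swap _ (K0.inv_mem k.2)
  have m2 : th i α β (q : EE ⧸ K0).out u ∈ Λ :=
    (Subgroup.mem_iInf.1 hu1 (⟨(i, α, β), hp⟩, (q : EE ⧸ K0)) : _)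
  exact mul_mem (mul_mem (inv_mem m1) m2) m1

theorem comap_fi {G H : Type*} [Group G] [Group H] (f : G →* H) (K : Subgroup H) [K.FiniteIndex] :
    (K.comap f).FiniteIndex := by
  refine ⟨?_⟩
  rw [Subgroup.index_comap]
  exact Subgroup.FiniteIndex.index_ne_zero

theorem Good.of_fi {n : ℕ} (I : Set (Fin n)) (Λ : Subgroup (OutF n)) [Λ.FiniteIndex] : Good I Λ :=
  fun _ _ _ _ _ => comap_fi _ _

theorem Good.of_sub {n : ℕ} (I : Set (Fin n)) (K : Subgroup EE) [K.FiniteIndex]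
    (N : Subgroup (GG I K)) [N.FiniteIndex] : Good I (N.map (GG I K).subtype) := by
  intro i α β h q
  let f : K →* GG I K := ((th i α β q).comp K.subtype).codRestrict (GG I K)
    (fun u => th_mem h q u.2)
  haveI : (N.comap f).FiniteIndex := comap_fi f N
  haveI : ((N.comap f).map K.subtype).FiniteIndex := ⟨by
    rw [Subgroup.index_map_subtype]
    exact mul_ne_zero Subgroup.FiniteIndex.index_ne_zero Subgroup.FiniteIndex.index_ne_zero⟩
  refine Subgroup.finiteIndex_of_le (H := (N.comap f).map K.subtype) ?_
  rintro _ ⟨u, hu, rfl⟩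
  exact ⟨f u, hu, rfl⟩

theorem GG_nontriv {n : ℕ} {I : Set (Fin n)} (K : Subgroup EE) [K.FiniteIndex] [K.Normal]
    {i : Fin n} {α β : Bool → Fin n} (h : OKT I i α β) : ∃ x ∈ GG I K, x ≠ 1 := by
  obtain ⟨m, hm0, hm⟩ := exists_pow_mem_fi K (FreeGroup.of true)
  refine ⟨_, PP_mem h hm, ?_⟩
  rw [map_pow, JJ_of]
  exact PP_nontriv (h.ia true) m hm0.ne'

theorem GG_comm {n : ℕ} {I I' : Set (Fin n)} (hd : ∀ x ∈ I, x ∉ I') (K K' : Subgroup EE) :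
    ∀ x ∈ GG I K, ∀ y ∈ GG I' K', x * y = y * x := by
  have hle : GG I K ≤ Subgroup.centralizer (GG I' K' : Set (OutF n)) := by
    rw [GG, GG, Subgroup.closure_le, Subgroup.centralizer_closure]
    rintro _ ⟨i, α, β, h, q, -, u, hu, rfl⟩
    rw [SetLike.mem_coe, Subgroup.mem_centralizer_iff]
    rintro _ ⟨i', α', β', h', q', -, u', hu', rfl⟩
    have ne : ∀ a ∈ I, ∀ b ∈ I', a ≠ b := by
      rintro a ha b hb rfl; exact hd a ha hb
    rw [th_apply, th_apply]
    have f1 : kill i ((JJ β' q')⁻¹ * JJ α' u' * JJ β' q') = (JJ β' q')⁻¹ * JJ α' u' * JJ β' q' := by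
      rw [map_mul, map_mul, map_inv, kill_JJ (fun s => (ne _ h.hi _ (h'.ha s)).symm),
        kill_JJ (fun s => (ne _ h.hi _ (h'.hb s)).symm)]
    have f2 : kill i' ((JJ β' q')⁻¹ * JJ α' u' * JJ β' q') = (JJ β' q')⁻¹ * JJ α' u' * JJ β' q' := by
      rw [map_mul, map_mul, map_inv, kill_JJ h'.ia, kill_JJ h'.ib]
    have f3 : kill i ((JJ β q)⁻¹ * JJ α u * JJ β q) = (JJ β q)⁻¹ * JJ α u * JJ β q := by
      rw [map_mul, map_mul, map_inv, kill_JJ h.ia, kill_JJ h.ib]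
    have f4 : kill i' ((JJ β q)⁻¹ * JJ α u * JJ β q) = (JJ β q)⁻¹ * JJ α u * JJ β q := by
      rw [map_mul, map_mul, map_inv, kill_JJ (fun s => (ne _ (h.ha s) _ h'.hi)),
        kill_JJ (fun s => (ne _ (h.hb s) _ h'.hi))]
    rw [PP_conj (ne _ h.hi _ h'.hi).symm f1 f2 f3, rEnd_of_free _ f4]
  intro x hx y hy
  exact (Subgroup.mem_centralizer_iff.1 (hle hx) y hy).symm

theorem rec_mk {n : ℕ} {I : Set (Fin n)} (K : Subgroup EE)
    {i : Fin n} {α β : Bool → Fin n} (h : OKT I i α β) (F : OutF n → ℝ)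
    (hF : ∀ x ∈ GG I K, ∀ y ∈ GG I K, F (x * y) = F x + F y) {u : EE} (hu : u ∈ K) (s : Bool)
    (q : EE) (hq : q = 1 ∨ q = FreeGroup.of (!s)) :
    ∃ A : EE → ℝ, (∀ g, ∀ k ∈ K, A (g * k) = A g) ∧ (∀ g, A (FreeGroup.of (!s) * g) = A g) ∧
      (∀ g, A (FreeGroup.of s * g) = A g + F (th i α β (q * g) u)) := by
  have F1 : F 1 = 0 := by
    have := hF 1 (one_mem _) 1 (one_mem _)
    rw [mul_one] at this; linarith
  have Finv : ∀ x ∈ GG I K, F x⁻¹ = - F x := by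
    intro x hx
    have := hF x hx x⁻¹ (inv_mem hx)
    rw [mul_inv_cancel, F1] at this; linarith
  set w : FreeGrp n := (JJ β q)⁻¹ * JJ α u * JJ β q with hw
  have fwi : kill i w = w := by
    rw [hw, map_mul, map_mul, map_inv, kill_JJ h.ia, kill_JJ h.ib]
  have fwc : kill (β s) w = w := by
    rw [hw, map_mul, map_mul, map_inv, kill_JJ (fun s' => h.ab s' s)]
    rcases hq with rfl | rfl
    · simp
    · rw [JJ_of, kill_of (h.bne s)]
  have mw : PP (β s) w ∈ GG I K := by
    rcases hq with hq | hq
    · have := th_mem (h.rot s) 1 hu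
      rw [th_one] at this
      rw [hw, hq]
      simpa using this
    · have := th_mem (h.rot s) (FreeGroup.of true) hu
      rw [th_apply, JJ_of] at this
      rw [hw, hq, JJ_of]
      exact this
  set X : EE → OutF n := fun g => PP i ((JJ β g)⁻¹ * rEnd (β s) w (JJ β g)) with hX
  have X1 : ∀ g, X (FreeGroup.of (!s) * g) = X g := by
    intro g
    simp only [hX]
    rw [map_mul (JJ β), map_mul (rEnd (β s) w), JJ_of, rEnd_of (h.bne s)]
    congr 1
    group
  have X2 : ∀ g, X (FreeGroup.of s * g) = th i α β (q * g) u * X g := by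
    intro g
    simp only [hX]
    rw [th_apply, ← map_mul, map_mul (JJ β), map_mul (rEnd (β s) w), JJ_of, rEnd_self, fwc, hw, map_mul (JJ β)]
    congr 1
    group
  have Xm : ∀ x g, X (x * g) ∈ GG I K ↔ X g ∈ GG I K := by
    have b1 : ∀ g, X (FreeGroup.of s * g) ∈ GG I K ↔ X g ∈ GG I K := by
      intro g; rw [X2]; exact Subgroup.mul_mem_cancel_left _ (th_mem h _ hu)
    have b2 : ∀ g, X (FreeGroup.of (!s) * g) ∈ GG I K ↔ X g ∈ GG I K := by
      intro g; rw [X1]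
    intro x
    have hx : x ∈ Subgroup.closure ({FreeGroup.of true, FreeGroup.of false} : Set EE) := by
      rw [EE_gen]; trivial
    induction hx using Subgroup.closure_induction with
    | mem x hx =>
      rcases hx with rfl | rfl
      · cases s
        · exact b2
        · exact b1
      · cases s
        · exact b1
        · exact b2
    | one => intro g; rw [one_mul]
    | mul x y _ _ h1 h2 => intro g; rw [mul_assoc, h1, h2]
    | inv x _ h => intro g; rw [← h (x⁻¹ * g), mul_inv_cancel_left]
  have X0 : X 1 = 1 := by simp [hX]
  have XG : ∀ g, X g ∈ GG I K := by
    intro g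
    have := (Xm g 1).2 (by rw [X0]; exact one_mem _)
    rwa [mul_one] at this
  have Xk : ∀ g, ∀ k ∈ K, X (g * k) =
      (PP i (JJ β k))⁻¹ * X g * (PP (β s) w * PP i (JJ β k) * (PP (β s) w)⁻¹) := by
    intro g k hk
    rw [PP_conj (h.ib s) fwi fwc (kill_JJ h.ib k), mul_inv_cancel_right]
    simp only [hX]
    simp [mul_assoc]
  refine ⟨fun g => F (X g), ?_, ?_, ?_⟩
  · intro g k hk
    have mk := PP_mem' h hk
    beta_reduce
    rw [Xk g k hk, hF _ (mul_mem (inv_mem mk) (XG g)) _ (mul_mem (mul_mem mw mk) (inv_mem mw)),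
      hF _ (inv_mem mk) _ (XG g), hF _ (mul_mem mw mk) _ (inv_mem mw), hF _ mw _ mk, Finv _ mk,
      Finv _ mw]
    ring
  · intro g
    beta_reduce
    rw [X1]
  · intro g
    beta_reduce
    rw [X2, hF _ (th_mem h _ hu) _ (XG g), add_comm]

theorem GG_F0 {n : ℕ} {I : Set (Fin n)} (K : Subgroup EE) [K.FiniteIndex] [K.Normal]
    {i : Fin n} {α β : Bool → Fin n} (h : OKT I i α β) (F : OutF n → ℝ)
    (hF : ∀ x ∈ GG I K, ∀ y ∈ GG I K, F (x * y) = F x + F y) {u : EE} (hu : u ∈ K) (q : EE) :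
    F (th i α β q u) = 0 := by
  obtain ⟨A, a1, a2, a3⟩ := rec_mk K h F hF hu false 1 (Or.inl rfl)
  obtain ⟨B, b1, b2, b3⟩ := rec_mk K h F hF hu false (FreeGroup.of true) (Or.inr rfl)
  obtain ⟨A', a1', a2', a3'⟩ := rec_mk K h F hF hu true 1 (Or.inl rfl)
  obtain ⟨B', b1', b2', b3'⟩ := rec_mk K h F hF hu true (FreeGroup.of false) (Or.inr rfl)
  simp only [one_mul] at a3 a3'
  refine recur_zero K (FreeGroup.of true) (FreeGroup.of false) EE_gen
    (fun g => F (th i α β g u)) A B A' B' ?_ a1 b1 a1' b1' a2 b2 a3 b3 a2' b2' a3' b3' q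
  intro g k hk
  have mk : th i β α 1 k ∈ GG I K := th_mem h.swap 1 hk
  have F1 : F 1 = 0 := by
    have := hF 1 (one_mem _) 1 (one_mem _)
    rw [mul_one] at this; linarith
  have Finv : F (th i β α 1 k)⁻¹ = - F (th i β α 1 k) := by
    have := hF _ mk _ (inv_mem mk)
    rw [mul_inv_cancel, F1] at this; linarith
  have mg := th_mem h g hu
  beta_reduce
  rw [th_mul, hF _ (mul_mem (inv_mem mk) mg) _ mk, hF _ (inv_mem mk) _ mg, Finv]
  ring

theorem GG_hom0 {n : ℕ} (I : Set (Fin n)) (K : Subgroup EE) [K.FiniteIndex] [K.Normal]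
    (f : GG I K →* Multiplicative ℝ) (g : GG I K) : f g = 1 := by
  classical
  let F : OutF n → ℝ := fun x => if h : x ∈ GG I K then Multiplicative.toAdd (f ⟨x, h⟩) else 0
  have Fe : ∀ x (hx : x ∈ GG I K), F x = Multiplicative.toAdd (f ⟨x, hx⟩) := by
    intro x hx; simp only [F, dif_pos hx]
  have hF : ∀ x ∈ GG I K, ∀ y ∈ GG I K, F (x * y) = F x + F y := by
    intro x hx y hy
    rw [Fe x hx, Fe y hy, Fe _ (mul_mem hx hy), ← toAdd_mul, ← map_mul]
    rfl
  have hle : GG I K ≤ f.ker.map (GG I K).subtype := by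
    refine (Subgroup.closure_le _).2 ?_
    rintro _ ⟨i, α, β, h, q, -, u, hu, rfl⟩
    have h0 := GG_F0 K h F hF hu q
    rw [Fe _ (th_mem h q hu)] at h0
    exact ⟨⟨_, th_mem h q hu⟩, h0, rfl⟩
  obtain ⟨g', hg', e⟩ := hle g.2
  have : g' = g := Subtype.ext e
  rw [← this]
  exact hg'

theorem IsC1Diffeo.op {f : Equiv.Perm 𝕊} (h : IsC1Diffeo f) : IsOPHomeo f := by
  obtain ⟨F, hF⟩ := h
  exact ⟨F, hF.1⟩

/-- final step: a finite index subgroup of `GG I K` cannot have a fixed point -/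
theorem final_step {n : ℕ} (Γ : Subgroup (OutF n)) (ρ : Γ →* Equiv.Perm 𝕊)
    (hρ : ∀ g : Γ, IsC1Diffeo (ρ g)) (hinj : Function.Injective ρ) {I : Set (Fin n)}
    {i : Fin n} {α β : Bool → Fin n} (h : OKT I i α β) (K : Subgroup EE) [K.FiniteIndex]
    (hK : GG I K ≤ Γ) (N : Subgroup (GG I K)) [N.FiniteIndex] (x : 𝕊)
    (hx : ∀ g ∈ N, (ρ.comp (Subgroup.inclusion hK)) g x = x) : False := by
  obtain ⟨K', k1, k2, k3⟩ := (Good.of_sub I K N).exists_K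
  have hsub : GG I K' ≤ GG I K := k3.trans (Subgroup.map_subtype_le _)
  have hΓ : GG I K' ≤ Γ := hsub.trans hK
  haveI : Group.FG (GG I K') := (Group.fg_iff_subgroup_fg _).2 (GG_fg I K')
  have key := thurston_circle (GG_hom0 I K') (ρ.comp (Subgroup.inclusion hΓ)) (fun g => hρ _) x (by
    intro g
    obtain ⟨g', hg', e⟩ := k3 g.2
    have h1 := hx g' hg'
    have h2 : Subgroup.inclusion hK g' = Subgroup.inclusion hΓ g := Subtype.ext e
    rw [MonoidHom.comp_apply, h2] at h1
    exact h1)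
  obtain ⟨y, hy, hy1⟩ := GG_nontriv K' h
  have h3 := key ⟨y, hy⟩
  rw [MonoidHom.comp_apply, ← map_one ρ] at h3
  have h4 := congrArg Subtype.val (hinj h3)
  exact hy1 h4

theorem exists_OKT {n : ℕ} (c : ℕ) (hc : c + 5 ≤ n) :
    ∃ i α β, OKT {x : Fin n | c ≤ x.1 ∧ x.1 < c + 5} i α β := by
  refine ⟨⟨c, by omega⟩, fun s => if s then ⟨c + 1, by omega⟩ else ⟨c + 2, by omega⟩,
    fun s => if s then ⟨c + 3, by omega⟩ else ⟨c + 4, by omega⟩, ?_, ?_, ?_, ?_, ?_, ?_, ?_, ?_⟩ <;>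
  simp

theorem main_thm
    (n : ℕ) (hn : 10 ≤ n)
    (Γ : Subgroup (OutF n)) [Γ.FiniteIndex]
    (ρ : Γ →* Equiv.Perm 𝕊) (hρ : ∀ g : Γ, IsC1Diffeo (ρ g)) :
    ¬ Function.Injective ρ := by
  intro hinj
  obtain ⟨i1, α1, β1, o1⟩ := exists_OKT (n := n) 0 (by omega)
  obtain ⟨i2, α2, β2, o2⟩ := exists_OKT (n := n) 5 (by omega)
  set I1 : Set (Fin n) := {x : Fin n | 0 ≤ x.1 ∧ x.1 < 0 + 5} with hI1
  set I2 : Set (Fin n) := {x : Fin n | 5 ≤ x.1 ∧ x.1 < 5 + 5} with hI2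
  have hd : ∀ x ∈ I1, x ∉ I2 := by
    intro x h1 h2
    simp only [hI1, hI2, Set.mem_setOf_eq] at h1 h2
    omega
  obtain ⟨K1, f1, _, l1⟩ := (Good.of_fi I1 Γ).exists_K
  obtain ⟨K2, f2, _, l2⟩ := (Good.of_fi I2 Γ).exists_K
  haveI : Group.FG (GG I2 K2) := (Group.fg_iff_subgroup_fg _).2 (GG_fg I2 K2)
  rcases circle_main (GG_hom0 I2 K2) (ρ.comp (Subgroup.inclusion l1)) (ρ.comp (Subgroup.inclusion l2))
    (fun g => (hρ _).op) (fun g => (hρ _).op) (by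
      intro a b x
      have e : Subgroup.inclusion l1 a * Subgroup.inclusion l2 b =
          Subgroup.inclusion l2 b * Subgroup.inclusion l1 a :=
        Subtype.ext (GG_comm hd K1 K2 a a.2 b b.2)
      have := congrArg (fun z => ρ z x) e
      simpa using this) with ⟨N, hN, x, hx⟩ | ⟨N, hN, x, hx⟩
  · exact final_step Γ ρ hρ hinj o1 K1 l1 N x hx
  · exact final_step Γ ρ hρ hinj o2 K2 l2 N x hx

end

/-- For `n ≥ 10`, any orientation preserving `C¹` action of an arbitrary
finite index subgroup `Γ` of `Out(Fₙ)` on the circle cannot be faithful. -/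
theorem out_finite_index_action_not_faithful
    (n : ℕ) (hn : 10 ≤ n)
    (Γ : Subgroup (OutF n)) [Γ.FiniteIndex]
    (ρ : Γ →* Equiv.Perm 𝕊) (hρ : ∀ g : Γ, IsC1Diffeo (ρ g)) :
    ¬ Function.Injective ρ := by
  exact main_thm n hn Γ ρ hρ
end
end

section
/- (Thurston's Stability Lemma) Let G be a finitely generated group acting on ℝ^n by C^1 diffeomorphisms with a global fixed point x. If the derivative Dg(x) is the identity linear map for every g ∈ G, then either there is a nontrivial group homomorphism from G into (ℝ,+), or G acts trivially (every element of G acts as the identity map on ℝ^n). -/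
noncomputable section

open Filter Topology Asymptotics

theorem ts_local (n : ℕ) (G : Type*) [Group G] [Group.FG G]
    (ρ : G →* Equiv.Perm (EuclideanSpace ℝ (Fin n)))
    (hdiff : ∀ g : G, ContDiff ℝ 1 (ρ g))
    (x : EuclideanSpace ℝ (Fin n)) (hfix : ∀ g : G, ρ g x = x)
    (hD : ∀ g : G, fderiv ℝ (ρ g) x = ContinuousLinearMap.id ℝ (EuclideanSpace ℝ (Fin n)))
    (hno : ¬ ∃ φ : G →* Multiplicative ℝ, φ ≠ 1) :
    ∀ᶠ y in 𝓝 x, ∀ g : G, ρ g y = y := by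
  obtain ⟨S, hS⟩ := Group.fg_def.1 (inferInstance : Group.FG G)
  let M : EuclideanSpace ℝ (Fin n) → ℝ := fun y => ∑ s ∈ S, ‖ρ s y - y‖
  have hM0 : ∀ y, M y = 0 → ∀ g : G, ρ g y = y := by
    intro y hy g
    have h1 : ∀ s ∈ S, ρ s y = y := by
      intro s hs
      have := (Finset.sum_eq_zero_iff_of_nonneg (fun s _ => norm_nonneg (ρ s y - y))).1 hy s hs
      exact sub_eq_zero.1 (norm_eq_zero.1 this)
    have hg : g ∈ Subgroup.closure (S : Set G) := by rw [hS]; trivial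
    induction hg using Subgroup.closure_induction with
    | mem s hs => exact h1 s hs
    | one => simp
    | mul a b _ _ ha hb => rw [map_mul, Equiv.Perm.mul_apply, hb, ha]
    | inv a _ ha => rw [map_inv, Equiv.Perm.inv_eq_iff_eq, ha]
  by_contra hcon
  have hfreq : ∃ᶠ y in 𝓝 x, M y ≠ 0 := by
    intro h
    apply hcon
    filter_upwards [h] with y hy
    exact hM0 y (not_not.1 hy)
  have hne : NeBot (𝓝 x ⊓ 𝓟 {y | M y ≠ 0}) := frequently_mem_iff_neBot.1 hfreq
  let U : Ultrafilter (EuclideanSpace ℝ (Fin n)) := Ultrafilter.of (𝓝 x ⊓ 𝓟 {y | M y ≠ 0})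
  have hU : (U : Filter _) ≤ 𝓝 x ⊓ 𝓟 {y | M y ≠ 0} := Ultrafilter.of_le _
  have hUx : (U : Filter _) ≤ 𝓝 x := hU.trans inf_le_left
  have hUM : ∀ᶠ y in (U : Filter _), M y ≠ 0 := (hU.trans inf_le_right) (mem_principal_self _)
  have hMnn : ∀ y, 0 ≤ M y := fun y => Finset.sum_nonneg (fun _ _ => norm_nonneg _)
  -- key estimate
  have key : ∀ g h : G, (fun y => (ρ (g * h) y - y) - (ρ g y - y) - (ρ h y - y))
      =o[(U : Filter _)] (fun y => ρ h y - y) := by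
    intro g h
    have h1 : HasStrictFDerivAt (ρ g) (ContinuousLinearMap.id ℝ (EuclideanSpace ℝ (Fin n))) x := by
      rw [← hD g]
      exact (hdiff g).contDiffAt.hasStrictFDerivAt one_ne_zero
    have h2 : Tendsto (fun y => (ρ h y, y)) (U : Filter _) (𝓝 (x, x)) := by
      have : Tendsto (ρ h) (𝓝 x) (𝓝 x) := by
        have := (hdiff h).continuous.tendsto x
        rwa [hfix h] at this
      exact ((this.prodMk_nhds tendsto_id).mono_left hUx)
    have h3 := h1.isLittleO.comp_tendsto h2
    refine h3.congr_left ?_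
    intro y
    simp only [Function.comp, map_mul, Equiv.Perm.mul_apply, ContinuousLinearMap.id_apply]
    abel
  have hO : ∀ g : G, (fun y => ρ g y - y) =O[(U : Filter _)] M := by
    intro g
    have hg : g ∈ Subgroup.closure (S : Set G) := by rw [hS]; trivial
    induction hg using Subgroup.closure_induction with
    | mem s hs =>
      refine IsBigO.of_bound 1 (Eventually.of_forall fun y => ?_)
      rw [one_mul, Real.norm_of_nonneg (hMnn y)]
      exact Finset.single_le_sum (f := fun s => ‖ρ s y - y‖) (fun _ _ => norm_nonneg _) hs
    | one => simpa using isBigO_zero M (U : Filter _)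
    | mul a b _ _ ha hb =>
      refine ((((key a b).isBigO.trans hb).add ha).add hb).congr_left ?_
      intro y
      abel
    | inv a _ ha =>
      refine (((key a⁻¹ a).isBigO.trans ha).neg_left.sub ha).congr_left ?_
      intro y
      simp only [inv_mul_cancel, map_one, Equiv.Perm.one_apply]
      abel
  let u : G → EuclideanSpace ℝ (Fin n) → EuclideanSpace ℝ (Fin n) :=
    fun g y => (M y)⁻¹ • (ρ g y - y)
  have hlim : ∀ g, ∃ v, Tendsto (u g) (U : Filter _) (𝓝 v) := by
    intro g
    obtain ⟨C, hC⟩ := (hO g).bound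
    have hb : ∀ᶠ y in (U : Filter _), u g y ∈ Metric.closedBall 0 C := by
      filter_upwards [hC, hUM] with y hy hy0
      have hpos : 0 < M y := lt_of_le_of_ne (hMnn y) (Ne.symm hy0)
      rw [mem_closedBall_zero_iff, norm_smul, norm_inv, Real.norm_of_nonneg (hMnn y)]
      rw [Real.norm_of_nonneg (hMnn y)] at hy
      rw [inv_mul_le_iff₀ hpos]
      linarith
    obtain ⟨v, _, hv⟩ := (isCompact_closedBall (0 : EuclideanSpace ℝ (Fin n)) C).ultrafilter_le_nhds
      (U.map (u g)) (le_principal_iff.2 hb)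
    exact ⟨v, hv⟩
  choose f hf using hlim
  have hadd : ∀ g h, f (g * h) = f g + f h := by
    intro g h
    have h1 : Tendsto (fun y => u (g * h) y - u g y - u h y) (U : Filter _)
        (𝓝 (f (g * h) - f g - f h)) := ((hf _).sub (hf g)).sub (hf h)
    have h2 : Tendsto (fun y => u (g * h) y - u g y - u h y) (U : Filter _) (𝓝 0) := by
      have h3 := (key g h).trans_isBigO (hO h)
      have h4 := (isBigO_refl (fun y => (M y)⁻¹) (U : Filter _)).smul_isLittleO h3
      have h5 : (fun y => u (g * h) y - u g y - u h y) =o[(U : Filter _)] (fun _ => (1 : ℝ)) := by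
        refine h4.congr' ?_ ?_
        · exact Eventually.of_forall fun y => by simp only [u, smul_sub]
        · filter_upwards [hUM] with y hy
          simp [hy]
      exact (isLittleO_one_iff ℝ).1 h5
    have h3 := tendsto_nhds_unique h1 h2
    rw [sub_sub, sub_eq_zero] at h3
    exact h3
  have hsum : ∑ s ∈ S, ‖f s‖ = 1 := by
    have h1 : Tendsto (fun y => ∑ s ∈ S, ‖u s y‖) (U : Filter _) (𝓝 (∑ s ∈ S, ‖f s‖)) :=
      tendsto_finsetSum _ fun s _ => (hf s).norm
    have h2 : Tendsto (fun y => ∑ s ∈ S, ‖u s y‖) (U : Filter _) (𝓝 1) := by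
      refine tendsto_const_nhds.congr' ?_
      filter_upwards [hUM] with y hy
      simp only [u, norm_smul, ← Finset.mul_sum]
      rw [norm_inv, Real.norm_of_nonneg (hMnn y)]
      exact (inv_mul_cancel₀ hy).symm
    exact tendsto_nhds_unique h1 h2
  apply hno
  have hex : ∃ s, f s ≠ 0 := by
    by_contra hc
    push Not at hc
    simp [hc] at hsum
  obtain ⟨s, hs⟩ := hex
  have hex2 : ∃ i, f s i ≠ 0 := by
    by_contra hc
    push Not at hc
    exact hs (by ext i; simpa using hc i)
  obtain ⟨i, hi⟩ := hex2
  refine ⟨MonoidHom.mk' (fun g => Multiplicative.ofAdd (f g i)) ?_, ?_⟩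
  · intro a b
    rw [hadd, ← ofAdd_add]
    rfl
  · intro h
    have := DFunLike.congr_fun h s
    exact hi (Multiplicative.ofAdd.injective this)

/-- Thurston's Stability Lemma.  Let `G` be a finitely generated group
acting on `ℝⁿ` by `C¹` diffeomorphisms with a global fixed point `x`.  If the derivative
`Dg(x)` is the identity for every `g ∈ G`, then either there is a nontrivial group
homomorphism `G → (ℝ, +)`, or `G` acts trivially. -/
theorem thurston_stability (n : ℕ) (G : Type*) [Group G] [Group.FG G]
    (ρ : G →* Equiv.Perm (EuclideanSpace ℝ (Fin n)))
    (hdiff : ∀ g : G, ContDiff ℝ 1 (ρ g))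
    (x : EuclideanSpace ℝ (Fin n)) (hfix : ∀ g : G, ρ g x = x)
    (hD : ∀ g : G, fderiv ℝ (ρ g) x = ContinuousLinearMap.id ℝ (EuclideanSpace ℝ (Fin n))) :
    (∃ φ : G →* Multiplicative ℝ, φ ≠ 1) ∨ (∀ (g : G) (y : EuclideanSpace ℝ (Fin n)), ρ g y = y) := by
  by_cases hno : ∃ φ : G →* Multiplicative ℝ, φ ≠ 1
  · exact Or.inl hno
  right
  let F : Set (EuclideanSpace ℝ (Fin n)) := {y | ∀ g : G, ρ g y = y ∧
    fderiv ℝ (ρ g) y = ContinuousLinearMap.id ℝ (EuclideanSpace ℝ (Fin n))}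
  have hclosed : IsClosed F := by
    have : F = ⋂ g : G, ({y | ρ g y = y} ∩ {y | fderiv ℝ (ρ g) y =
        ContinuousLinearMap.id ℝ (EuclideanSpace ℝ (Fin n))}) := by
      ext y; simp [F]
    rw [this]
    refine isClosed_iInter fun g => IsClosed.inter ?_ ?_
    · exact isClosed_eq (hdiff g).continuous continuous_id
    · exact isClosed_eq ((hdiff g).continuous_fderiv one_ne_zero) continuous_const
  have hopen : IsOpen F := by
    rw [isOpen_iff_mem_nhds]
    intro y hy
    have h := ts_local n G ρ hdiff y (fun g => (hy g).1) (fun g => (hy g).2) hno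
    filter_upwards [h.eventually_nhds] with z hz g
    refine ⟨hz.self_of_nhds g, ?_⟩
    have : (ρ g : EuclideanSpace ℝ (Fin n) → EuclideanSpace ℝ (Fin n)) =ᶠ[𝓝 z] id :=
      hz.mono fun w hw => hw g
    rw [this.fderiv_eq, fderiv_id]
  have huniv : F = Set.univ := IsClopen.eq_univ ⟨hclosed, hopen⟩ ⟨x, fun g => ⟨hfix g, hD g⟩⟩
  intro g y
  have : y ∈ F := by rw [huniv]; trivial
  exact (this g).1
end
end
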